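/- arXiv:1911.02806 — 9 statements merged into one kernel-verified Lean document; each statement's English description precedes it below -/
import Mathlib

section
/- For every δ > 0, the QR mixed problem admits exactly one solution: there exists a unique pair (E_δ, F_δ) ∈ (U + V₀) × M such that δ⟨E_δ, φ⟩_H + conj(a(φ, F_δ)) = 0 for all φ ∈ V₀ and a(E_δ, ψ) − ⟨F_δ, ψ⟩_H = ℓ(ψ) for all ψ ∈ M. (Abstract form of the well-posedness part of Theorem 3.2.) -/
open ComplexConjugate

local notation "⟪" x ", " y "⟫" => @inner ℂ _ _ x y

/-!
By the Riesz representation theorem `a(u, ψ) = ⟨T u, ψ⟩` and `ℓ(ψ) = ⟨L, ψ⟩` for a bounded operator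
`T` into `M` and some `L ∈ M`. The second equation then says `F = T E - L`, and substituting this
into the first gives the normal equation of the Tikhonov functional
`δ ‖E‖² + ‖T E - L‖²` on the affine space `U + V₀`. With `E = U + v` and `S = T|_{V₀}`, that is a
linear equation for `v` with operator `δ + S†S`, which is coercive and hence invertible.
-/

open ContinuousLinearMap
open scoped InnerProduct InnerProductSpace

section Riesz

theorem isLinearMap_of_map_smul_add {R E F : Type*} [Semiring R] [AddCommMonoid E] [Module R E]
    [AddCommGroup F] [Module R F] {f : E → F}
    (hf : ∀ (c : R) (x y : E), f (c • x + y) = c • f x + f y) : IsLinearMap R f where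
  map_add x y := by simpa only [one_smul] using hf 1 x y
  map_smul c x := by
    have map_zero : f 0 = 0 := by simpa using hf 1 0 0
    simpa only [map_zero, add_zero] using hf c x 0

variable {𝕜 E F : Type*} [RCLike 𝕜] [SeminormedAddCommGroup E] [NormedSpace 𝕜 E]
  [NormedAddCommGroup F] [InnerProductSpace 𝕜 F] [CompleteSpace F]

theorem exists_inner_eq_of_bounded_conjLinear {f : F → 𝕜}
    (hf : ∀ (c : 𝕜) (x y : F), f (c • x + y) = conj c * f x + f y)
    (hf_bdd : ∃ C : ℝ, ∀ x, ‖f x‖ ≤ C * ‖x‖) :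
    ∃ z : F, ∀ x, ⟪x, z⟫_𝕜 = f x := by
  have conj_linear : IsLinearMap 𝕜 fun x ↦ conj (f x) :=
    isLinearMap_of_map_smul_add fun c x y ↦ by simp [hf]
  let g : StrongDual 𝕜 F := (conj_linear.mk' _).mkContinuousOfExistsBound <| by simpa using hf_bdd
  refine ⟨(InnerProductSpace.toDual 𝕜 F).symm g, fun x ↦ ?_⟩
  calc ⟪x, (InnerProductSpace.toDual 𝕜 F).symm g⟫_𝕜 = conj (g x) := by
        rw [← inner_conj_symm, InnerProductSpace.toDual_symm_apply]
    _ = f x := RCLike.conj_conj (f x)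

theorem exists_inner_apply_eq_of_bounded_sesquilinear {a : E → F → 𝕜}
    (ha_lin : ∀ (c : 𝕜) (u u' : E) (v : F), a (c • u + u') v = c * a u v + a u' v)
    (ha_conj : ∀ (c : 𝕜) (u : E) (v v' : F), a u (c • v + v') = conj c * a u v + a u v')
    (ha_bdd : ∃ C : ℝ, ∀ u v, ‖a u v‖ ≤ C * ‖u‖ * ‖v‖) :
    ∃ T : E →L[𝕜] F, ∀ u v, ⟪v, T u⟫_𝕜 = a u v := by
  obtain ⟨C, hC⟩ := ha_bdd
  choose T hT using fun u : E ↦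
    exists_inner_eq_of_bounded_conjLinear (fun c ↦ ha_conj c u) ⟨C * ‖u‖, hC u⟩
  have T_linear : IsLinearMap 𝕜 T := isLinearMap_of_map_smul_add fun c u u' ↦
    ext_inner_left 𝕜 fun v ↦ by simp only [hT, ha_lin, inner_add_right, inner_smul_right]
  have T_bounded (u : E) : ‖T u‖ ≤ |C| * ‖u‖ := by
    have sq_le : ‖T u‖ * ‖T u‖ ≤ |C| * ‖u‖ * ‖T u‖ := calc
      ‖T u‖ * ‖T u‖ = ‖a u (T u)‖ := by
        rw [← hT, ← inner_self_re_eq_norm, inner_self_eq_norm_mul_norm]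
      _ ≤ C * ‖u‖ * ‖T u‖ := hC u (T u)
      _ ≤ |C| * ‖u‖ * ‖T u‖ := by gcongr; exact le_abs_self C
    rcases (norm_nonneg (T u)).eq_or_lt' with norm_zero | norm_pos
    · rw [norm_zero]; positivity
    · exact le_of_mul_le_mul_right sq_le norm_pos
  exact ⟨(T_linear.mk' T).mkContinuousOfExistsBound ⟨|C|, T_bounded⟩, fun u v ↦ hT u v⟩

end Riesz

section Tikhonov

variable {𝕜 E F : Type*} [RCLike 𝕜] [NormedAddCommGroup E] [InnerProductSpace 𝕜 E]
  [NormedAddCommGroup F] [InnerProductSpace 𝕜 F] {δ : ℝ}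

theorem isUnit_smul_one_add_of_isPositive [CompleteSpace E] {A : E →L[𝕜] E} (hA : A.IsPositive)
    (hδ : 0 < δ) : IsUnit ((δ : 𝕜) • (1 : E →L[𝕜] E) + A) := by
  refine isUnit_of_forall_le_norm_inner_map _ (c := ⟨δ, hδ.le⟩) hδ fun x ↦ ?_
  calc ‖x‖ ^ 2 * δ ≤ δ * ‖x‖ ^ 2 + RCLike.re ⟪A x, x⟫_𝕜 := by
        linarith [hA.re_inner_nonneg_left x]
    _ = RCLike.re ⟪((δ : 𝕜) • (1 : E →L[𝕜] E) + A) x, x⟫_𝕜 := by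
        simp [inner_add_left, inner_smul_left]
    _ ≤ ‖⟪((δ : 𝕜) • (1 : E →L[𝕜] E) + A) x, x⟫_𝕜‖ := RCLike.re_le_norm _

theorem existsUnique_tikhonov_normal_eq [CompleteSpace F] (V : Submodule 𝕜 E) [CompleteSpace V]
    (T : E →L[𝕜] F) (hδ : 0 < δ) (U : E) (L : F) :
    ∃! x, x - U ∈ V ∧ ∀ φ ∈ V, (δ : 𝕜) * ⟪φ, x⟫_𝕜 + ⟪T φ, T x - L⟫_𝕜 = 0 := by
  let S : V →L[𝕜] F := T ∘L V.subtypeL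
  let A : V →L[𝕜] V := (δ : 𝕜) • (1 : V →L[𝕜] V) + S† ∘L S
  let g : V := -((δ : 𝕜) • V.orthogonalProjectionOnto U + (S†) (T U - L))
  have A_bijective : Function.Bijective A :=
    isUnit_iff_bijective.mp (isUnit_smul_one_add_of_isPositive (isPositive_adjoint_comp_self S) hδ)
  have residual (v φ : V) :
      (δ : 𝕜) * ⟪(φ : E), U + v⟫_𝕜 + ⟪T φ, T (U + v) - L⟫_𝕜 = ⟪φ, A v⟫_𝕜 - ⟪φ, g⟫_𝕜 := by
    simp only [A, S, g, add_apply, smul_apply, one_apply_eq_self, comp_apply,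
      Submodule.subtypeL_apply, map_add, inner_add_right, inner_sub_right, inner_neg_right,
      inner_smul_right, adjoint_inner_right, ← Submodule.coe_inner,
      Submodule.inner_orthogonalProjectionOnto_eq_of_mem_left]
    ring
  have normal_eq_iff (v : V) :
      (∀ φ ∈ V, (δ : 𝕜) * ⟪φ, U + v⟫_𝕜 + ⟪T φ, T (U + v) - L⟫_𝕜 = 0) ↔ A v = g := by
    rw [ext_iff_inner_left 𝕜, Subtype.forall]
    refine forall₂_congr fun φ hφ ↦ ?_
    rw [← sub_eq_zero (a := ⟪_, A v⟫_𝕜), ← residual v ⟨φ, hφ⟩]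
  obtain ⟨v, hv, v_unique⟩ := A_bijective.existsUnique g
  refine ⟨U + v, ⟨by simp, (normal_eq_iff v).mpr hv⟩, fun x ⟨hxU, hx⟩ ↦ ?_⟩
  obtain ⟨w, rfl⟩ : ∃ w : V, x = U + w := ⟨⟨x - U, hxU⟩, (add_sub_cancel U x).symm⟩
  rw [v_unique w ((normal_eq_iff w).mp hx)]

end Tikhonov

theorem existsUnique_prod_of_snd_eq {α β : Type*} {P : α → β → Prop} {f : α → β}
    (h : ∃! x, P x (f x)) : ∃! p : α × β, P p.1 p.2 ∧ p.2 = f p.1 := by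
  obtain ⟨x, hx, x_unique⟩ := h
  refine ⟨(x, f x), ⟨hx, rfl⟩, ?_⟩
  rintro ⟨y, z⟩ ⟨hy, rfl : z = f y⟩
  rw [x_unique y hy]

theorem existsUnique_mixed_problem
    {𝕜 E F : Type*} [RCLike 𝕜] [NormedAddCommGroup E] [InnerProductSpace 𝕜 E]
    [NormedAddCommGroup F] [InnerProductSpace 𝕜 F] [CompleteSpace F]
    (V : Submodule 𝕜 E) [CompleteSpace V] {a : E → F → 𝕜} {ℓ : F → 𝕜}
    (ha_lin : ∀ (c : 𝕜) (u u' : E) (v : F), a (c • u + u') v = c * a u v + a u' v)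
    (ha_conj : ∀ (c : 𝕜) (u : E) (v v' : F), a u (c • v + v') = conj c * a u v + a u v')
    (ha_bdd : ∃ C : ℝ, ∀ u v, ‖a u v‖ ≤ C * ‖u‖ * ‖v‖)
    (hℓ_conj : ∀ (c : 𝕜) (v w : F), ℓ (c • v + w) = conj c * ℓ v + ℓ w)
    (hℓ_bdd : ∃ C : ℝ, ∀ v, ‖ℓ v‖ ≤ C * ‖v‖) (U : E) {δ : ℝ} (hδ : 0 < δ) :
    ∃! p : E × F, p.1 - U ∈ V ∧
      (∀ φ ∈ V, (δ : 𝕜) * ⟪φ, p.1⟫_𝕜 + conj (a φ p.2) = 0) ∧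
      ∀ ψ, a p.1 ψ - ⟪ψ, p.2⟫_𝕜 = ℓ ψ := by
  obtain ⟨T, hT⟩ := exists_inner_apply_eq_of_bounded_sesquilinear ha_lin ha_conj ha_bdd
  obtain ⟨L, hL⟩ := exists_inner_eq_of_bounded_conjLinear hℓ_conj hℓ_bdd
  have conj_a (u : E) (w : F) : conj (a u w) = ⟪T u, w⟫_𝕜 := by rw [← hT, inner_conj_symm]
  have second_eq_iff (u : E) (w : F) : (∀ ψ, a u ψ - ⟪ψ, w⟫_𝕜 = ℓ ψ) ↔ w = T u - L := calc
    _ ↔ T u - w = L := by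
      simp only [← hT, ← hL, ← inner_sub_right, ← ext_iff_inner_left 𝕜]
    _ ↔ w = T u - L := by rw [sub_eq_iff_eq_add, eq_sub_iff_add_eq', eq_comm]
  simp only [conj_a, second_eq_iff, ← and_assoc]
  exact existsUnique_prod_of_snd_eq
    (P := fun u w ↦ u - U ∈ V ∧ ∀ φ ∈ V, (δ : 𝕜) * ⟪φ, u⟫_𝕜 + ⟪T φ, w⟫_𝕜 = 0)
    (existsUnique_tikhonov_normal_eq V T hδ U L)

theorem qr_mixed_problem_wellposed_general
    {𝕜 H K : Type*} [RCLike 𝕜] [NormedAddCommGroup H] [InnerProductSpace 𝕜 H]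
    [NormedAddCommGroup K] [InnerProductSpace 𝕜 K]
    (V₀ : Submodule 𝕜 H) (M : Submodule 𝕜 K)
    (hV₀ : IsComplete (V₀ : Set H)) (hM : IsComplete (M : Set K))
    (a : H → K → 𝕜)
    (ha_lin : ∀ (c : 𝕜) (u u' : H) (v : K), v ∈ M → a (c • u + u') v = c * a u v + a u' v)
    (ha_conj : ∀ (c : 𝕜) (u : H) (v v' : K), v ∈ M → v' ∈ M →
      a u (c • v + v') = conj c * a u v + a u v')
    (ha_bdd : ∃ C : ℝ, ∀ (u : H) (v : K), v ∈ M → ‖a u v‖ ≤ C * ‖u‖ * ‖v‖)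
    (ℓ : K → 𝕜)
    (hℓ_conj : ∀ (c : 𝕜) (v w : K), v ∈ M → w ∈ M → ℓ (c • v + w) = conj c * ℓ v + ℓ w)
    (hℓ_bdd : ∃ C : ℝ, ∀ v ∈ M, ‖ℓ v‖ ≤ C * ‖v‖)
    (U : H) (δ : ℝ) (hδ : 0 < δ) :
    ∃! p : H × K, (p.1 - U ∈ V₀ ∧ p.2 ∈ M) ∧
      (∀ φ ∈ V₀, (δ : 𝕜) * ⟪φ, p.1⟫_𝕜 + conj (a φ p.2) = 0) ∧
      (∀ ψ ∈ M, a p.1 ψ - ⟪ψ, p.2⟫_𝕜 = ℓ ψ) := by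
  have : CompleteSpace V₀ := hV₀.completeSpace_coe
  have : CompleteSpace M := hM.completeSpace_coe
  obtain ⟨⟨E, F⟩, ⟨hE, h_first, h_second⟩, solution_unique⟩ :=
    existsUnique_mixed_problem (F := M) (a := fun u ψ ↦ a u ψ) (ℓ := fun ψ ↦ ℓ ψ) V₀
      (fun c u u' v ↦ ha_lin c u u' v v.2) (fun c u v v' ↦ ha_conj c u v v' v.2 v'.2)
      (ha_bdd.imp fun _ hC u v ↦ hC u v v.2)
      (fun c v w ↦ hℓ_conj c v w v.2 w.2) (hℓ_bdd.imp fun _ hC v ↦ hC v v.2) U hδ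
  refine ⟨(E, F), ⟨⟨hE, F.2⟩, h_first, fun ψ hψ ↦ h_second ⟨ψ, hψ⟩⟩, ?_⟩
  rintro ⟨E', F'⟩ ⟨⟨hE', hF'⟩, h_first', h_second'⟩
  have solution_eq : (E', (⟨F', hF'⟩ : M)) = (E, F) :=
    solution_unique _ ⟨hE', h_first', fun ψ ↦ h_second' ψ ψ.2⟩
  exact congrArg (Prod.map id Subtype.val) solution_eq

/-- for every `δ > 0` the QR mixed problem admits exactly one solution
`(E_δ, F_δ) ∈ (U + V₀) × M`. -/
theorem qr_mixed_problem_wellposed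
    {H : Type*} [NormedAddCommGroup H] [InnerProductSpace ℂ H] [CompleteSpace H]
    (V₀ M : Submodule ℂ H)
    (hV₀ : IsClosed (V₀ : Set H)) (hM : IsClosed (M : Set H))
    (a : H → H → ℂ)
    (ha_lin : ∀ (c : ℂ) (u u' v : H), v ∈ M → a (c • u + u') v = c * a u v + a u' v)
    (ha_conj : ∀ (c : ℂ) (u v v' : H), v ∈ M → v' ∈ M →
      a u (c • v + v') = conj c * a u v + a u v')
    (ha_bdd : ∃ C : ℝ, ∀ (u v : H), v ∈ M → ‖a u v‖ ≤ C * ‖u‖ * ‖v‖)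
    (ℓ : H → ℂ)
    (hℓ_conj : ∀ (c : ℂ) (v w : H), v ∈ M → w ∈ M → ℓ (c • v + w) = conj c * ℓ v + ℓ w)
    (hℓ_bdd : ∃ C : ℝ, ∀ v ∈ M, ‖ℓ v‖ ≤ C * ‖v‖)
    (U : H) (δ : ℝ) (hδ : 0 < δ) :
    ∃! p : H × H, (p.1 - U ∈ V₀ ∧ p.2 ∈ M) ∧
      (∀ φ ∈ V₀, (δ : ℂ) * ⟪φ, p.1⟫ + conj (a φ p.2) = 0) ∧
      (∀ ψ ∈ M, a p.1 ψ - ⟪ψ, p.2⟫ = ℓ ψ) :=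
  qr_mixed_problem_wellposed_general V₀ M hV₀.isComplete hM.isComplete a ha_lin ha_conj ha_bdd
    ℓ hℓ_conj hℓ_bdd U δ hδ
end

section
/- Suppose E ∈ U + V₀ satisfies a(E, ψ) = ℓ(ψ) for all ψ ∈ M, and let (E_δ, F_δ) ∈ (U + V₀) × M be a solution of the QR mixed problem for some δ > 0. Then the orthogonality relation δ⟨E_δ, E_δ − E⟩_H + ‖F_δ‖_H² = 0 holds, and consequently ‖E_δ‖_H ≤ ‖E‖_H and ‖F_δ‖_H ≤ √δ · ‖E‖_H. -/
open ComplexConjugate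

local notation "⟪" x ", " y "⟫" => @inner ℂ _ _ x y

/-! Subtracting the equation of the exact solution `E` from the residual equation, tested with
`Fδ`, gives `a (Eδ - E) Fδ = ‖Fδ‖²`; since `Eδ - E ∈ V₀`, the Euler equation may be tested with
`Eδ - E`, and this is the orthogonality relation. Polarizing its real part yields the energy
identity `δ‖Eδ‖² + δ‖Eδ - E‖² + 2‖Fδ‖² = δ‖E‖²`, from which both estimates are read off. -/

section QuasiReversibility

variable {𝕜 H K : Type*} [RCLike 𝕜] [SeminormedAddCommGroup H] [InnerProductSpace 𝕜 H]
  [SeminormedAddCommGroup K] [InnerProductSpace 𝕜 K]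

/-- The pair `(Eδ, Fδ)` solves the QR (quasi-reversibility) mixed problem with regularization
parameter `δ` for the equation `a E ψ = ℓ ψ`, `E ∈ U + V₀`. The space `K` plays the role of `M`, and
`Fδ` represents the residual of `Eδ`. Inner products have their arguments swapped with respect to
the paper, as Mathlib's are conjugate-linear in the first argument. -/
structure IsQRSolution (V₀ : AddSubgroup H) (a : H →+ K → 𝕜) (ℓ : K → 𝕜) (U : H) (δ : ℝ)
    (Eδ : H) (Fδ : K) : Prop where
  sub_mem : Eδ - U ∈ V₀
  euler_eq : ∀ φ ∈ V₀, (δ : 𝕜) * inner 𝕜 φ Eδ + conj (a φ Fδ) = 0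
  residual_eq : ∀ ψ, a Eδ ψ - inner 𝕜 ψ Fδ = ℓ ψ

theorem mul_norm_sq_add_eq_of_mul_inner_sub_add_eq_zero {δ r : ℝ} {x y : H}
    (h : (δ : 𝕜) * inner 𝕜 (x - y) x + (r : 𝕜) = 0) :
    δ * ‖x‖ ^ 2 + δ * ‖x - y‖ ^ 2 + 2 * r = δ * ‖y‖ ^ 2 := by
  have hre : δ * RCLike.re (inner 𝕜 (x - y) x) + r = 0 := by
    simpa only [map_add, RCLike.re_ofReal_mul, RCLike.ofReal_re, map_zero] using
      congrArg RCLike.re h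
  have hpolar : ‖y‖ ^ 2 = ‖x - y‖ ^ 2 - 2 * RCLike.re (inner 𝕜 (x - y) x) + ‖x‖ ^ 2 := by
    simpa only [sub_sub_cancel_left, norm_neg] using norm_sub_sq (𝕜 := 𝕜) (x - y) x
  linear_combination 2 * hre - δ * hpolar

namespace IsQRSolution

variable {V₀ : AddSubgroup H} {a : H →+ K → 𝕜} {ℓ : K → 𝕜} {U E Eδ : H} {Fδ : K} {δ : ℝ}

theorem form_sub_eq_norm_sq (h : IsQRSolution V₀ a ℓ U δ Eδ Fδ) (hE_eq : ∀ ψ, a E ψ = ℓ ψ) :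
    a (Eδ - E) Fδ = ((‖Fδ‖ ^ 2 : ℝ) : 𝕜) :=
  calc a (Eδ - E) Fδ = a Eδ Fδ - ℓ Fδ := by rw [map_sub, Pi.sub_apply, hE_eq]
    _ = inner 𝕜 Fδ Fδ := by rw [← h.residual_eq, sub_sub_cancel]
    _ = ((‖Fδ‖ ^ 2 : ℝ) : 𝕜) := by rw [inner_self_eq_norm_sq_to_K, RCLike.ofReal_pow]

theorem orthogonality (h : IsQRSolution V₀ a ℓ U δ Eδ Fδ) (hE_mem : E - U ∈ V₀)
    (hE_eq : ∀ ψ, a E ψ = ℓ ψ) :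
    (δ : 𝕜) * inner 𝕜 (Eδ - E) Eδ + ((‖Fδ‖ ^ 2 : ℝ) : 𝕜) = 0 := by
  have hmem : Eδ - E ∈ V₀ := by
    simpa only [sub_sub_sub_cancel_right] using V₀.sub_mem h.sub_mem hE_mem
  simpa only [h.form_sub_eq_norm_sq hE_eq, RCLike.conj_ofReal] using h.euler_eq _ hmem

theorem energy_identity (h : IsQRSolution V₀ a ℓ U δ Eδ Fδ) (hE_mem : E - U ∈ V₀)
    (hE_eq : ∀ ψ, a E ψ = ℓ ψ) :
    δ * ‖Eδ‖ ^ 2 + δ * ‖Eδ - E‖ ^ 2 + 2 * ‖Fδ‖ ^ 2 = δ * ‖E‖ ^ 2 :=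
  mul_norm_sq_add_eq_of_mul_inner_sub_add_eq_zero (h.orthogonality hE_mem hE_eq)

theorem norm_le (h : IsQRSolution V₀ a ℓ U δ Eδ Fδ) (hδ : 0 < δ) (hE_mem : E - U ∈ V₀)
    (hE_eq : ∀ ψ, a E ψ = ℓ ψ) : ‖Eδ‖ ≤ ‖E‖ := by
  have hsq : δ * ‖Eδ‖ ^ 2 ≤ δ * ‖E‖ ^ 2 := by
    rw [← h.energy_identity hE_mem hE_eq, add_assoc]
    exact le_add_of_nonneg_right (by positivity)
  exact le_of_sq_le_sq (le_of_mul_le_mul_left hsq hδ) (norm_nonneg E)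

theorem norm_residual_le (h : IsQRSolution V₀ a ℓ U δ Eδ Fδ) (hδ : 0 ≤ δ) (hE_mem : E - U ∈ V₀)
    (hE_eq : ∀ ψ, a E ψ = ℓ ψ) : ‖Fδ‖ ≤ √δ * ‖E‖ := by
  have hsq : ‖Fδ‖ ^ 2 ≤ δ * ‖E‖ ^ 2 := by
    have hrest : 0 ≤ δ * ‖Eδ‖ ^ 2 + δ * ‖Eδ - E‖ ^ 2 + ‖Fδ‖ ^ 2 := by positivity
    linarith [h.energy_identity hE_mem hE_eq]
  calc ‖Fδ‖ ≤ √(δ * ‖E‖ ^ 2) := Real.le_sqrt_of_sq_le hsq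
    _ = √δ * ‖E‖ := by rw [Real.sqrt_mul hδ, Real.sqrt_sq (norm_nonneg E)]

end IsQRSolution

theorem qr_orthogonality_and_estimates_general {V₀ : AddSubgroup H} {a : H →+ K → 𝕜} {ℓ : K → 𝕜}
    {U E Eδ : H} {Fδ : K} {δ : ℝ} (hδ : 0 < δ) (hE_mem : E - U ∈ V₀) (hE_eq : ∀ ψ, a E ψ = ℓ ψ)
    (h : IsQRSolution V₀ a ℓ U δ Eδ Fδ) :
    (δ : 𝕜) * inner 𝕜 (Eδ - E) Eδ + ((‖Fδ‖ ^ 2 : ℝ) : 𝕜) = 0 ∧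
    ‖Eδ‖ ≤ ‖E‖ ∧
    ‖Fδ‖ ≤ √δ * ‖E‖ :=
  ⟨h.orthogonality hE_mem hE_eq, h.norm_le hδ hE_mem hE_eq, h.norm_residual_le hδ.le hE_mem hE_eq⟩

end QuasiReversibility

/-- orthogonality relation `δ⟨E_δ, E_δ − E⟩_H + ‖F_δ‖² = 0` and the
resulting estimates `‖E_δ‖ ≤ ‖E‖` and `‖F_δ‖ ≤ √δ ‖E‖`.
(Paper inner products `⟨u,φ⟩` are linear in the first argument, hence written as
`⟪φ, u⟫` in Mathlib's convention.) -/
theorem qr_orthogonality_and_estimates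
    {H : Type*} [NormedAddCommGroup H] [InnerProductSpace ℂ H] [CompleteSpace H]
    (V₀ M : Submodule ℂ H)
    (hV₀ : IsClosed (V₀ : Set H)) (hM : IsClosed (M : Set H))
    (a : H → H → ℂ)
    (ha_lin : ∀ (c : ℂ) (u u' v : H), v ∈ M → a (c • u + u') v = c * a u v + a u' v)
    (ha_conj : ∀ (c : ℂ) (u v v' : H), v ∈ M → v' ∈ M →
      a u (c • v + v') = conj c * a u v + a u v')
    (ha_bdd : ∃ C : ℝ, ∀ (u v : H), v ∈ M → ‖a u v‖ ≤ C * ‖u‖ * ‖v‖)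
    (ℓ : H → ℂ)
    (hℓ_conj : ∀ (c : ℂ) (v w : H), v ∈ M → w ∈ M → ℓ (c • v + w) = conj c * ℓ v + ℓ w)
    (hℓ_bdd : ∃ C : ℝ, ∀ v ∈ M, ‖ℓ v‖ ≤ C * ‖v‖)
    (U : H) (δ : ℝ) (hδ : 0 < δ)
    (E : H) (hE_mem : E - U ∈ V₀) (hE_eq : ∀ ψ ∈ M, a E ψ = ℓ ψ)
    (Eδ Fδ : H) (hEδ_mem : Eδ - U ∈ V₀) (hFδ_mem : Fδ ∈ M)
    (h_eq1 : ∀ φ ∈ V₀, (δ : ℂ) * ⟪φ, Eδ⟫ + conj (a φ Fδ) = 0)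
    (h_eq2 : ∀ ψ ∈ M, a Eδ ψ - ⟪ψ, Fδ⟫ = ℓ ψ) :
    (δ : ℂ) * ⟪Eδ - E, Eδ⟫ + ((‖Fδ‖ ^ 2 : ℝ) : ℂ) = 0 ∧
    ‖Eδ‖ ≤ ‖E‖ ∧
    ‖Fδ‖ ≤ Real.sqrt δ * ‖E‖ := by
  let form : H →+ M → ℂ := .mk' (fun u v ↦ a u v) fun u u' ↦ by
    ext v; simpa only [one_smul, one_mul, Pi.add_apply] using ha_lin 1 u u' v v.2
  exact qr_orthogonality_and_estimates_general (a := form) (V₀ := V₀.toAddSubgroup)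
    (ℓ := fun ψ ↦ ℓ ψ) (Fδ := ⟨Fδ, hFδ_mem⟩) hδ hE_mem (fun ψ ↦ hE_eq ψ ψ.2)
    ⟨hEδ_mem, h_eq1, fun ψ ↦ h_eq2 ψ ψ.2⟩
end

section
/- Let δ > 0, let V₀ʰ ⊆ V₀ and Mʰ ⊆ M be closed subspaces, and let C > 0 be a continuity constant for the QR block form, i.e. |δ⟨u,φ⟩_H + conj(a(φ,v)) − a(u,ψ) + ⟨v,ψ⟩_H| ≤ C (‖u‖_H² + ‖v‖_H²)^{1/2} (‖φ‖_H² + ‖ψ‖_H²)^{1/2} for all u, φ ∈ H and v, ψ ∈ M. Then the discrete QR problem — find (E_δʰ, F_δʰ) ∈ (U + V₀ʰ) × Mʰ with δ⟨E_δʰ, φ⟩_H + conj(a(φ, F_δʰ)) = 0 for all φ ∈ V₀ʰ and a(E_δʰ, ψ) − ⟨F_δʰ, ψ⟩_H = ℓ(ψ) for all ψ ∈ Mʰ — has a unique solution, and if (E_δ, F_δ) is the solution of the continuous QR mixed problem, then for every φ ∈ U + V₀ʰ and ψ ∈ Mʰ: (‖E_δ − E_δʰ‖_H² + ‖F_δ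 − F_δʰ‖_H²)^{1/2} ≤ (C / min(δ,1)) (‖E_δ − φ‖_H² + ‖F_δ − ψ‖_H²)^{1/2}. (Céa-type quasi-optimality underlying Proposition 3.3.) -/
open ComplexConjugate

local notation "⟪" x ", " y "⟫" => @inner ℂ _ _ x y

/-!
On the product `H × M` the two equations of the QR problem merge into one: adding them, with the
second one negated, gives a single variational equation for the block form
`δ⟨u, φ⟩ + conj (a(φ, v)) - a(u, ψ) + ⟨v, ψ⟩`. The off-diagonal terms are skew-Hermitian, so on the
diagonal the real part is `δ‖u‖² + ‖v‖² ≥ min δ 1 * (‖u‖² + ‖v‖²)`. The form is thus coercive, and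
the discrete problem is a Galerkin method to which Lax–Milgram and Céa's lemma apply.
-/

section Galerkin

variable {𝕜 X : Type*} [RCLike 𝕜] [NormedAddCommGroup X]

theorem exists_forall_apply_eq_of_coercive [InnerProductSpace 𝕜 X] [CompleteSpace X]
    (B : X →L⋆[𝕜] X →L[𝕜] 𝕜) {α : ℝ} (hα : 0 < α) (hcoer : ∀ x, α * ‖x‖ ^ 2 ≤ ‖B x x‖)
    (f : X →L[𝕜] 𝕜) : ∃ x, ∀ y, B x y = f y := by
  let T := InnerProductSpace.continuousLinearMapOfBilin B
  have hT : IsUnit T := T.isUnit_of_forall_le_norm_inner_map (c := ⟨α, hα.le⟩) hα fun x => by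
    rw [InnerProductSpace.continuousLinearMapOfBilin_apply, mul_comm]
    exact hcoer x
  obtain ⟨x, hx⟩ :=
    (ContinuousLinearMap.isUnit_iff_bijective.1 hT).2 ((InnerProductSpace.toDual 𝕜 X).symm f)
  refine ⟨x, fun y => ?_⟩
  rw [← InnerProductSpace.continuousLinearMapOfBilin_apply, ← InnerProductSpace.toDual_symm_apply]
  exact congrArg (inner 𝕜 · y) hx

/-- `x` solves the variational problem `B x w = f w` for all `w ∈ W`, in the affine trial space
`x₀ + W`. As for Mathlib's inner product, `B` is conjugate-linear in the trial variable and linear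
in the test variable. -/
def IsGalerkinSolution [NormedSpace 𝕜 X] (B : X →ₗ⋆[𝕜] X →ₗ[𝕜] 𝕜) (f : X →L[𝕜] 𝕜) (x₀ : X)
    (W : Submodule 𝕜 X) (x : X) : Prop :=
  x - x₀ ∈ W ∧ ∀ w ∈ W, B x w = f w

namespace IsGalerkinSolution

section NormedSpace

variable [NormedSpace 𝕜 X] {B : X →ₗ⋆[𝕜] X →ₗ[𝕜] 𝕜} {f : X →L[𝕜] 𝕜} {x₀ x y : X}
  {W Wₕ : Submodule 𝕜 X} {α C : ℝ}

theorem apply_sub_eq_zero (hle : Wₕ ≤ W) (hx : IsGalerkinSolution B f x₀ W x)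
    (hy : IsGalerkinSolution B f x₀ Wₕ y) {w : X} (hw : w ∈ Wₕ) : B (x - y) w = 0 := by
  rw [map_sub, LinearMap.sub_apply, hx.2 w (hle hw), hy.2 w hw, sub_self]

theorem unique (hα : 0 < α) (hcoer : ∀ x, α * ‖x‖ ^ 2 ≤ ‖B x x‖)
    (hx : IsGalerkinSolution B f x₀ W x) (hy : IsGalerkinSolution B f x₀ W y) : x = y := by
  have hmem : x - y ∈ W := by simpa using W.sub_mem hx.1 hy.1
  have hle : α * ‖x - y‖ ^ 2 ≤ 0 := by
    simpa only [hx.apply_sub_eq_zero le_rfl hy hmem, norm_zero] using hcoer (x - y)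
  have hsq : ‖x - y‖ ^ 2 = 0 := le_antisymm (nonpos_of_mul_nonpos_right hle hα) (sq_nonneg _)
  exact sub_eq_zero.1 (norm_eq_zero.1 (pow_eq_zero_iff two_ne_zero |>.1 hsq))

/-- Céa's lemma. -/
theorem norm_sub_le_div_mul_norm_sub (hα : 0 < α)
    (hcoer : ∀ x, α * ‖x‖ ^ 2 ≤ ‖B x x‖) (hbdd : ∀ x y, ‖B x y‖ ≤ C * ‖x‖ * ‖y‖) (hle : Wₕ ≤ W)
    (hx : IsGalerkinSolution B f x₀ W x) (hy : IsGalerkinSolution B f x₀ Wₕ y) {z : X}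
    (hz : z - x₀ ∈ Wₕ) : ‖x - y‖ ≤ C / α * ‖x - z‖ := by
  have hmem : z - y ∈ Wₕ := by simpa using Wₕ.sub_mem hz hy.1
  have horth : B (x - y) (x - y) = B (x - y) (x - z) := by
    rw [← sub_add_sub_cancel x z y, map_add (B _), sub_add_sub_cancel,
      hx.apply_sub_eq_zero hle hy hmem, add_zero]
  have hsq : α * ‖x - y‖ * ‖x - y‖ ≤ C * ‖x - z‖ * ‖x - y‖ :=
    calc α * ‖x - y‖ * ‖x - y‖ = α * ‖x - y‖ ^ 2 := by ring
      _ ≤ ‖B (x - y) (x - z)‖ := horth ▸ hcoer (x - y)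
      _ ≤ C * ‖x - y‖ * ‖x - z‖ := hbdd _ _
      _ = C * ‖x - z‖ * ‖x - y‖ := by ring
  rw [div_mul_eq_mul_div, le_div_iff₀' hα]
  rcases (norm_nonneg (x - y)).eq_or_lt with hzero | hpos
  · rw [← hzero, mul_zero]
    rcases (norm_nonneg (x - z)).eq_or_lt with hz_zero | hz_pos
    · rw [← hz_zero, mul_zero]
    · exact nonneg_of_mul_nonneg_left ((norm_nonneg _).trans (hbdd (x - z) (x - z))) hz_pos
  · exact le_of_mul_le_mul_right hsq hpos

end NormedSpace

section InnerProductSpace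

variable [InnerProductSpace 𝕜 X] {B : X →ₗ⋆[𝕜] X →ₗ[𝕜] 𝕜} {f : X →L[𝕜] 𝕜} {x₀ : X}
  {W : Submodule 𝕜 X} {α C : ℝ}

theorem exists_of_coercive [CompleteSpace W] (hα : 0 < α)
    (hcoer : ∀ x, α * ‖x‖ ^ 2 ≤ ‖B x x‖) (hbdd : ∀ x y, ‖B x y‖ ≤ C * ‖x‖ * ‖y‖) :
    ∃ x, IsGalerkinSolution B f x₀ W x := by
  let BW : W →L⋆[𝕜] W →L[𝕜] 𝕜 := (B.domRestrict₁₂ W W).mkContinuous₂ C fun x y => hbdd x y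
  let r : X →L[𝕜] 𝕜 := f - B.mkContinuous₂ C hbdd x₀
  obtain ⟨w, hw⟩ :=
    exists_forall_apply_eq_of_coercive BW hα (fun x => hcoer x) (r.comp W.subtypeL)
  refine ⟨x₀ + w, by simp, fun v hv => ?_⟩
  have hwv : B w v = f v - B x₀ v := hw ⟨v, hv⟩
  rw [map_add, LinearMap.add_apply, hwv, add_sub_cancel]

theorem existsUnique_of_coercive [CompleteSpace W] (hα : 0 < α)
    (hcoer : ∀ x, α * ‖x‖ ^ 2 ≤ ‖B x x‖) (hbdd : ∀ x y, ‖B x y‖ ≤ C * ‖x‖ * ‖y‖) :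
    ∃! x, IsGalerkinSolution B f x₀ W x :=
  existsUnique_of_exists_of_unique (exists_of_coercive hα hcoer hbdd)
    fun _ _ => unique hα hcoer

end InnerProductSpace

end IsGalerkinSolution

end Galerkin

section BlockForm

variable {𝕜 H M : Type*} [RCLike 𝕜] [NormedAddCommGroup H] [InnerProductSpace 𝕜 H]
  [NormedAddCommGroup M] [InnerProductSpace 𝕜 M]

/-- The conjugate of the QR block form, whose value at trial functions `(u, v)` and test functions
`(φ, ψ)` is `δ⟨u, φ⟩ + conj (a(φ, v)) - a(u, ψ) + ⟨v, ψ⟩`. The conjugation makes it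
conjugate-linear in the first argument, as in `IsGalerkinSolution`. -/
noncomputable def qrForm (a : H →ₗ[𝕜] M →ₗ⋆[𝕜] 𝕜) (δ : ℝ) :
    WithLp 2 (H × M) →ₗ⋆[𝕜] WithLp 2 (H × M) →ₗ[𝕜] 𝕜 :=
  LinearMap.mk₂'ₛₗ (starRingEnd 𝕜) (RingHom.id 𝕜)
    (fun x y => δ * inner 𝕜 x.fst y.fst + a y.fst x.snd - conj (a x.fst y.snd) +
      inner 𝕜 x.snd y.snd)
    (fun x x' y => by simp only [WithLp.add_fst, WithLp.add_snd, inner_add_left, map_add,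
      LinearMap.add_apply]; ring)
    (fun c x y => by simp only [WithLp.smul_fst, WithLp.smul_snd, inner_smul_left, map_smul,
      LinearMap.map_smulₛₗ, LinearMap.smul_apply, smul_eq_mul, map_mul]; ring)
    (fun x y y' => by simp only [WithLp.add_fst, WithLp.add_snd, inner_add_right, map_add,
      LinearMap.add_apply]; ring)
    (fun c x y => by simp only [WithLp.smul_fst, WithLp.smul_snd, inner_smul_right, map_smul,
      LinearMap.map_smulₛₗ, LinearMap.smul_apply, smul_eq_mul, map_mul, RCLike.conj_conj,
      RingHom.id_apply]; ring)

variable (a : H →ₗ[𝕜] M →ₗ⋆[𝕜] 𝕜) (δ : ℝ)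

theorem qrForm_apply (x y : WithLp 2 (H × M)) :
    qrForm a δ x y = δ * inner 𝕜 x.fst y.fst + a y.fst x.snd - conj (a x.fst y.snd) +
      inner 𝕜 x.snd y.snd :=
  rfl

theorem conj_qrForm_apply (x y : WithLp 2 (H × M)) :
    conj (qrForm a δ x y) = δ * inner 𝕜 y.fst x.fst + conj (a y.fst x.snd) - a x.fst y.snd +
      inner 𝕜 y.snd x.snd := by
  simp only [qrForm_apply, map_add, map_sub, map_mul, RCLike.conj_ofReal, RCLike.conj_conj,
    inner_conj_symm]

theorem re_qrForm_self (x : WithLp 2 (H × M)) :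
    RCLike.re (qrForm a δ x x) = δ * ‖x.fst‖ ^ 2 + ‖x.snd‖ ^ 2 := by
  simp only [qrForm_apply, map_add, map_sub, RCLike.re_ofReal_mul, RCLike.conj_re,
    inner_self_eq_norm_sq]
  ring

theorem min_mul_norm_sq_le_norm_qrForm_self (x : WithLp 2 (H × M)) :
    min δ 1 * ‖x‖ ^ 2 ≤ ‖qrForm a δ x x‖ :=
  calc min δ 1 * ‖x‖ ^ 2 = min δ 1 * ‖x.fst‖ ^ 2 + min δ 1 * ‖x.snd‖ ^ 2 := by
        rw [WithLp.prod_norm_sq_eq_of_L2, mul_add]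
    _ ≤ δ * ‖x.fst‖ ^ 2 + 1 * ‖x.snd‖ ^ 2 := by
        gcongr
        exacts [min_le_left _ _, min_le_right _ _]
    _ = RCLike.re (qrForm a δ x x) := by rw [re_qrForm_self, one_mul]
    _ ≤ ‖qrForm a δ x x‖ := RCLike.re_le_norm _

end BlockForm

section HilbertProdInclusion

variable {𝕜 H K : Type*} [RCLike 𝕜] [NormedAddCommGroup H] [NormedSpace 𝕜 H]
  [NormedAddCommGroup K] [NormedSpace 𝕜 K]

/-- The inclusion of `H × M` in `H × K`, with the Hilbert norm on its domain: it identifies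
elements of the space carrying `qrForm` with pairs `(E, F)` of unknowns of the mixed problem. -/
noncomputable def hilbertProdInclusion (H : Type*) [NormedAddCommGroup H] [NormedSpace 𝕜 H]
    (M : Submodule 𝕜 K) : WithLp 2 (H × M) →ₗ[𝕜] H × K :=
  LinearMap.prodMap LinearMap.id M.subtype ∘ₗ (WithLp.linearEquiv 2 𝕜 (H × M)).toLinearMap

theorem hilbertProdInclusion_apply (M : Submodule 𝕜 K) (x : WithLp 2 (H × M)) :
    hilbertProdInclusion H M x = (x.fst, (x.snd : K)) :=
  rfl

theorem norm_eq_sqrt_hilbertProdInclusion (M : Submodule 𝕜 K) (x : WithLp 2 (H × M)) :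
    ‖x‖ = √(‖(hilbertProdInclusion H M x).1‖ ^ 2 + ‖(hilbertProdInclusion H M x).2‖ ^ 2) :=
  WithLp.prod_norm_eq_of_L2 x

theorem exists_hilbertProdInclusion_eq {M : Submodule 𝕜 K} {p : H × K} (hp : p.2 ∈ M) :
    ∃ x, hilbertProdInclusion H M x = p :=
  ⟨WithLp.toLp 2 (p.1, ⟨p.2, hp⟩), rfl⟩

theorem completeSpace_comap_hilbertProdInclusion {M N : Submodule 𝕜 K} (hN : N ≤ M)
    (V : Submodule 𝕜 H) [CompleteSpace V] [CompleteSpace N] :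
    CompleteSpace ((V.prod N).comap (hilbertProdInclusion H M)) := by
  have hj : Isometry (WithLp.map 2 (Prod.map V.subtype (Submodule.inclusion hN))) :=
    Isometry.withLpProdMap 2 isometry_subtype_coe fun _ _ => rfl
  have hrange : Set.range (WithLp.map 2 (Prod.map V.subtype (Submodule.inclusion hN))) =
      (V.prod N).comap (hilbertProdInclusion H M) := by
    ext x
    constructor
    · rintro ⟨y, rfl⟩
      exact ⟨y.fst.2, y.snd.2⟩
    · exact fun hx => ⟨WithLp.toLp 2 (⟨x.fst, hx.1⟩, ⟨x.snd, hx.2⟩), rfl⟩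
  exact (hrange ▸ hj.isUniformInducing.isComplete_range).completeSpace_coe

end HilbertProdInclusion

section SesquilinearOn

variable {𝕜 H K : Type*} [RCLike 𝕜]

theorem exists_linearMap_eq_of_sesquilinearOn [AddCommGroup H] [Module 𝕜 H] [AddCommGroup K]
    [Module 𝕜 K] {M : Submodule 𝕜 K} {a : H → K → 𝕜}
    (ha_lin : ∀ (c : 𝕜) (u u' : H) (v : K), v ∈ M → a (c • u + u') v = c * a u v + a u' v)
    (ha_conj : ∀ (c : 𝕜) (u : H) (v v' : K), v ∈ M → v' ∈ M →
      a u (c • v + v') = conj c * a u v + a u v') :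
    ∃ b : H →ₗ[𝕜] M →ₗ⋆[𝕜] 𝕜, ∀ (u : H) (v : M), b u v = a u v := by
  have zero_left : ∀ v ∈ M, a 0 v = 0 := fun v hv => by simpa using ha_lin 1 0 0 v hv
  have zero_right : ∀ u, a u 0 = 0 := fun u => by
    simpa using ha_conj 1 u 0 0 M.zero_mem M.zero_mem
  refine ⟨LinearMap.mk₂'ₛₗ (RingHom.id 𝕜) (starRingEnd 𝕜) (fun u v => a u v)
    (fun u u' v => ?_) (fun c u v => ?_) (fun u v v' => ?_) (fun c u v => ?_), fun _ _ => rfl⟩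
  · simpa using ha_lin 1 u u' v v.2
  · simpa [zero_left v v.2] using ha_lin c u 0 v v.2
  · simpa using ha_conj 1 u v v' v.2 v'.2
  · simpa [zero_right] using ha_conj c u v 0 v.2 M.zero_mem

theorem exists_continuousLinearMap_eq_conj [NormedAddCommGroup K] [NormedSpace 𝕜 K]
    {M : Submodule 𝕜 K} {ℓ : K → 𝕜}
    (hℓ_conj : ∀ (c : 𝕜) (v w : K), v ∈ M → w ∈ M → ℓ (c • v + w) = conj c * ℓ v + ℓ w)
    (hℓ_bdd : ∃ C : ℝ, ∀ v ∈ M, ‖ℓ v‖ ≤ C * ‖v‖) :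
    ∃ g : M →L[𝕜] 𝕜, ∀ v : M, g v = conj (ℓ v) := by
  have map_zero : ℓ 0 = 0 := by simpa using hℓ_conj 1 0 0 M.zero_mem M.zero_mem
  obtain ⟨C, hC⟩ := hℓ_bdd
  let g : M →ₗ[𝕜] 𝕜 :=
    { toFun := fun v => conj (ℓ v)
      map_add' := fun v w => by simpa using congrArg conj (hℓ_conj 1 v w v.2 w.2)
      map_smul' := fun c v => by
        simpa [map_zero] using congrArg conj (hℓ_conj c v 0 v.2 M.zero_mem) }
  exact ⟨g.mkContinuous C fun v => (RCLike.norm_conj _).trans_le (hC v v.2), fun _ => rfl⟩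

end SesquilinearOn

section MixedProblem

variable {𝕜 H K : Type*} [RCLike 𝕜] [NormedAddCommGroup H] [InnerProductSpace 𝕜 H]
  [NormedAddCommGroup K] [InnerProductSpace 𝕜 K]

/-- The pair `p = (E, F)` solves the QR mixed problem with trial space `(U + V) × N` and test space
`V × N`. Both the continuous problem and its discretization are of this form. -/
def IsQRSolution_s5 (a : H → K → 𝕜) (ℓ : K → 𝕜) (U : H) (δ : ℝ) (V : Submodule 𝕜 H)
    (N : Submodule 𝕜 K) (p : H × K) : Prop :=
  (p.1 - U ∈ V ∧ p.2 ∈ N) ∧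
    (∀ φ ∈ V, (δ : 𝕜) * inner 𝕜 φ p.1 + conj (a φ p.2) = 0) ∧
    (∀ ψ ∈ N, a p.1 ψ - inner 𝕜 ψ p.2 = ℓ ψ)

variable {M N : Submodule 𝕜 K} {a : H → K → 𝕜} {b : H →ₗ[𝕜] M →ₗ⋆[𝕜] 𝕜} {δ C : ℝ}

theorem norm_qrForm_le (hb : ∀ (u : H) (v : M), b u v = a u v)
    (hC : ∀ (u φ : H) (v ψ : K), v ∈ M → ψ ∈ M →
      ‖(δ : 𝕜) * inner 𝕜 φ u + conj (a φ v) - a u ψ + inner 𝕜 ψ v‖ ≤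
        C * √(‖u‖ ^ 2 + ‖v‖ ^ 2) * √(‖φ‖ ^ 2 + ‖ψ‖ ^ 2))
    (x y : WithLp 2 (H × M)) : ‖qrForm b δ x y‖ ≤ C * ‖x‖ * ‖y‖ := by
  rw [← RCLike.norm_conj, conj_qrForm_apply, hb, hb, norm_eq_sqrt_hilbertProdInclusion M x,
    norm_eq_sqrt_hilbertProdInclusion M y]
  exact hC _ _ _ _ x.snd.2 y.snd.2

variable {ℓ : K → 𝕜} {g : M →L[𝕜] 𝕜} {U : H} {V : Submodule 𝕜 H}

theorem isQRSolution_hilbertProdInclusion_iff (hb : ∀ (u : H) (v : M), b u v = a u v)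
    (hg : ∀ v : M, g v = conj (ℓ v)) (hN : N ≤ M) {x : WithLp 2 (H × M)} :
    IsQRSolution_s5 a ℓ U δ V N (hilbertProdInclusion H M x) ↔
      IsGalerkinSolution (qrForm b δ) (-(g ∘L WithLp.sndL 2 𝕜 H M)) (WithLp.toLp 2 (U, 0))
        ((V.prod N).comap (hilbertProdInclusion H M)) x := by
  have eq_iff_residuals (φ : H) (ψ : M) :
      qrForm b δ x (WithLp.toLp 2 (φ, ψ)) = -g ψ ↔
        (δ * inner 𝕜 φ x.fst + conj (a φ x.snd)) - (a x.fst ψ - inner 𝕜 (ψ : K) x.snd) =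
          -ℓ ψ := by
    rw [← (starRingEnd 𝕜).injective.eq_iff, conj_qrForm_apply, map_neg, hg, RCLike.conj_conj,
      hb, hb, sub_add]
    rfl
  have ℓ_zero : ℓ 0 = 0 := by simpa using (hg 0).symm
  have a_zero_left (v : M) : a 0 v = 0 := by simp [← hb]
  have a_zero_right (u : H) : a u 0 = 0 := by simpa using (hb u 0).symm
  refine and_congr (by simp [hilbertProdInclusion_apply])
    ⟨fun ⟨h₁, h₂⟩ w hw => (eq_iff_residuals w.fst w.snd).2 ?_,
      fun h => ⟨fun φ hφ => ?_, fun ψ hψ => ?_⟩⟩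
  · simp only [hilbertProdInclusion_apply] at h₁ h₂
    rw [h₁ w.fst hw.1, h₂ w.snd hw.2, zero_sub]
  · have hφ_test := (eq_iff_residuals φ 0).1 (h _ ⟨hφ, N.zero_mem⟩)
    simpa [ℓ_zero, a_zero_right, hilbertProdInclusion_apply] using hφ_test
  · have hψ_test := (eq_iff_residuals 0 ⟨ψ, hN hψ⟩).1 (h _ ⟨V.zero_mem, hψ⟩)
    simpa [a_zero_left, hilbertProdInclusion_apply] using congrArg Neg.neg hψ_test

theorem existsUnique_isQRSolution [CompleteSpace V] [CompleteSpace N]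
    (hb : ∀ (u : H) (v : M), b u v = a u v) (hg : ∀ v : M, g v = conj (ℓ v)) (hN : N ≤ M)
    (hδ : 0 < δ) (hbdd : ∀ x y, ‖qrForm b δ x y‖ ≤ C * ‖x‖ * ‖y‖) :
    ∃! p, IsQRSolution_s5 a ℓ U δ V N p := by
  have := completeSpace_comap_hilbertProdInclusion hN V
  obtain ⟨x, hx, hunique⟩ : ∃! x, IsQRSolution_s5 a ℓ U δ V N (hilbertProdInclusion H M x) := by
    simp_rw [isQRSolution_hilbertProdInclusion_iff hb hg hN]
    exact IsGalerkinSolution.existsUnique_of_coercive (lt_min hδ one_pos)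
      (min_mul_norm_sq_le_norm_qrForm_self b δ) hbdd
  refine ⟨hilbertProdInclusion H M x, hx, fun p hp => ?_⟩
  obtain ⟨y, rfl⟩ := exists_hilbertProdInclusion_eq (hN hp.1.2)
  rw [hunique y hp]

theorem IsQRSolution_s5.sqrt_norm_sub_le {Vₕ : Submodule 𝕜 H} {Mₕ : Submodule 𝕜 K} {p pₕ q : H × K}
    (hp : IsQRSolution_s5 a ℓ U δ V M p) (hpₕ : IsQRSolution_s5 a ℓ U δ Vₕ Mₕ pₕ)
    (hb : ∀ (u : H) (v : M), b u v = a u v) (hg : ∀ v : M, g v = conj (ℓ v))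
    (hVₕ : Vₕ ≤ V) (hMₕ : Mₕ ≤ M) (hδ : 0 < δ)
    (hbdd : ∀ x y, ‖qrForm b δ x y‖ ≤ C * ‖x‖ * ‖y‖) (hqU : q.1 - U ∈ Vₕ) (hq : q.2 ∈ Mₕ) :
    √(‖p.1 - pₕ.1‖ ^ 2 + ‖p.2 - pₕ.2‖ ^ 2) ≤
      C / min δ 1 * √(‖p.1 - q.1‖ ^ 2 + ‖p.2 - q.2‖ ^ 2) := by
  obtain ⟨x, rfl⟩ := exists_hilbertProdInclusion_eq hp.1.2
  obtain ⟨y, rfl⟩ := exists_hilbertProdInclusion_eq (hMₕ hpₕ.1.2)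
  obtain ⟨z, rfl⟩ := exists_hilbertProdInclusion_eq (hMₕ hq)
  rw [isQRSolution_hilbertProdInclusion_iff hb hg le_rfl] at hp
  rw [isQRSolution_hilbertProdInclusion_iff hb hg hMₕ] at hpₕ
  have hz : z - WithLp.toLp 2 (U, 0) ∈ (Vₕ.prod Mₕ).comap (hilbertProdInclusion H M) :=
    ⟨hqU, by simpa [hilbertProdInclusion_apply] using hq⟩
  simpa only [norm_eq_sqrt_hilbertProdInclusion, map_sub, Prod.fst_sub, Prod.snd_sub] using
    hp.norm_sub_le_div_mul_norm_sub (lt_min hδ one_pos)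
      (min_mul_norm_sq_le_norm_qrForm_self b δ) hbdd
      (Submodule.comap_mono (Submodule.prod_mono hVₕ hMₕ)) hpₕ hz

theorem qr_discrete_wellposed_and_cea_general {V₀ V₀h : Submodule 𝕜 H} {M Mh : Submodule 𝕜 K}
    [CompleteSpace V₀h] [CompleteSpace Mh] (hV₀h_le : V₀h ≤ V₀) (hMh_le : Mh ≤ M)
    {a : H → K → 𝕜}
    (ha_lin : ∀ (c : 𝕜) (u u' : H) (v : K), v ∈ M → a (c • u + u') v = c * a u v + a u' v)
    (ha_conj : ∀ (c : 𝕜) (u : H) (v v' : K), v ∈ M → v' ∈ M →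
      a u (c • v + v') = conj c * a u v + a u v')
    {ℓ : K → 𝕜}
    (hℓ_conj : ∀ (c : 𝕜) (v w : K), v ∈ M → w ∈ M → ℓ (c • v + w) = conj c * ℓ v + ℓ w)
    (hℓ_bdd : ∃ C : ℝ, ∀ v ∈ M, ‖ℓ v‖ ≤ C * ‖v‖)
    (U : H) {δ : ℝ} (hδ : 0 < δ) {C : ℝ}
    (hC : ∀ (u φ : H) (v ψ : K), v ∈ M → ψ ∈ M →
      ‖(δ : 𝕜) * inner 𝕜 φ u + conj (a φ v) - a u ψ + inner 𝕜 ψ v‖ ≤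
        C * √(‖u‖ ^ 2 + ‖v‖ ^ 2) * √(‖φ‖ ^ 2 + ‖ψ‖ ^ 2)) :
    (∃! p, IsQRSolution_s5 a ℓ U δ V₀h Mh p) ∧
      ∀ p pₕ, IsQRSolution_s5 a ℓ U δ V₀ M p → IsQRSolution_s5 a ℓ U δ V₀h Mh pₕ →
        ∀ q : H × K, q.1 - U ∈ V₀h → q.2 ∈ Mh →
          √(‖p.1 - pₕ.1‖ ^ 2 + ‖p.2 - pₕ.2‖ ^ 2) ≤
            C / min δ 1 * √(‖p.1 - q.1‖ ^ 2 + ‖p.2 - q.2‖ ^ 2) := by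
  obtain ⟨b, hb⟩ := exists_linearMap_eq_of_sesquilinearOn ha_lin ha_conj
  obtain ⟨g, hg⟩ := exists_continuousLinearMap_eq_conj hℓ_conj hℓ_bdd
  have hbdd := norm_qrForm_le hb hC
  exact ⟨existsUnique_isQRSolution hb hg hMh_le hδ hbdd, fun _ _ hp hpₕ _ hqU hq =>
    hp.sqrt_norm_sub_le hpₕ hb hg hV₀h_le hMh_le hδ hbdd hqU hq⟩

end MixedProblem

/-- the discrete QR problem on conforming subspaces `V₀ʰ ⊆ V₀`, `Mʰ ⊆ M`
has a unique solution and satisfies the Céa-type quasi-optimality estimate with constant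
`C / min(δ,1)`. -/
theorem qr_discrete_wellposed_and_cea
    {H : Type*} [NormedAddCommGroup H] [InnerProductSpace ℂ H] [CompleteSpace H]
    (V₀ M : Submodule ℂ H)
    (hV₀ : IsClosed (V₀ : Set H)) (hM : IsClosed (M : Set H))
    (a : H → H → ℂ)
    (ha_lin : ∀ (c : ℂ) (u u' v : H), v ∈ M → a (c • u + u') v = c * a u v + a u' v)
    (ha_conj : ∀ (c : ℂ) (u v v' : H), v ∈ M → v' ∈ M →
      a u (c • v + v') = conj c * a u v + a u v')
    (ha_bdd : ∃ C : ℝ, ∀ (u v : H), v ∈ M → ‖a u v‖ ≤ C * ‖u‖ * ‖v‖)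
    (ℓ : H → ℂ)
    (hℓ_conj : ∀ (c : ℂ) (v w : H), v ∈ M → w ∈ M → ℓ (c • v + w) = conj c * ℓ v + ℓ w)
    (hℓ_bdd : ∃ C : ℝ, ∀ v ∈ M, ‖ℓ v‖ ≤ C * ‖v‖)
    (U : H) (δ : ℝ) (hδ : 0 < δ)
    (V₀h Mh : Submodule ℂ H)
    (hV₀h_le : V₀h ≤ V₀) (hMh_le : Mh ≤ M)
    (hV₀h : IsClosed (V₀h : Set H)) (hMh : IsClosed (Mh : Set H))
    (C : ℝ) (hC_pos : 0 < C)
    (hC : ∀ (u φ v ψ : H), v ∈ M → ψ ∈ M →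
      ‖(δ : ℂ) * ⟪φ, u⟫ + conj (a φ v) - a u ψ + ⟪ψ, v⟫‖ ≤
        C * Real.sqrt (‖u‖ ^ 2 + ‖v‖ ^ 2) * Real.sqrt (‖φ‖ ^ 2 + ‖ψ‖ ^ 2)) :
    (∃! p : H × H, (p.1 - U ∈ V₀h ∧ p.2 ∈ Mh) ∧
      (∀ φ ∈ V₀h, (δ : ℂ) * ⟪φ, p.1⟫ + conj (a φ p.2) = 0) ∧
      (∀ ψ ∈ Mh, a p.1 ψ - ⟪ψ, p.2⟫ = ℓ ψ)) ∧
    (∀ Eδ Fδ Eδh Fδh : H,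
      (Eδ - U ∈ V₀ ∧ Fδ ∈ M) →
      (∀ φ ∈ V₀, (δ : ℂ) * ⟪φ, Eδ⟫ + conj (a φ Fδ) = 0) →
      (∀ ψ ∈ M, a Eδ ψ - ⟪ψ, Fδ⟫ = ℓ ψ) →
      (Eδh - U ∈ V₀h ∧ Fδh ∈ Mh) →
      (∀ φ ∈ V₀h, (δ : ℂ) * ⟪φ, Eδh⟫ + conj (a φ Fδh) = 0) →
      (∀ ψ ∈ Mh, a Eδh ψ - ⟪ψ, Fδh⟫ = ℓ ψ) →
      ∀ φ ψ : H, φ - U ∈ V₀h → ψ ∈ Mh →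
        Real.sqrt (‖Eδ - Eδh‖ ^ 2 + ‖Fδ - Fδh‖ ^ 2) ≤
          (C / min δ 1) * Real.sqrt (‖Eδ - φ‖ ^ 2 + ‖Fδ - ψ‖ ^ 2)) := by
  have := hV₀h.completeSpace_coe
  have := hMh.completeSpace_coe
  obtain ⟨hwell, hcea⟩ := qr_discrete_wellposed_and_cea_general hV₀h_le hMh_le ha_lin ha_conj
    hℓ_conj hℓ_bdd U hδ hC
  exact ⟨hwell, fun Eδ Fδ Eδh Fδh hmem h₁ h₂ hmemh h₁h h₂h φ ψ =>
    hcea (Eδ, Fδ) (Eδh, Fδh) ⟨hmem, h₁, h₂⟩ ⟨hmemh, h₁h, h₂h⟩ (φ, ψ)⟩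
end

section
/- For every δ > 0 and η > 0, the relaxed QR problem admits exactly one solution: there exists a unique pair (E_α, F_α) ∈ V × M such that δ⟨E_α, φ⟩_V + η²⟨γE_α − f, γφ⟩_L + conj(a(φ, F_α)) = 0 for all φ ∈ V and a(E_α, ψ) − ⟨F_α, ψ⟩_V = ℓ(ψ) for all ψ ∈ M. (Abstract form of the well-posedness part of Theorem 4.1.) -/
open ComplexConjugate

local notation "⟪" x ", " y "⟫" => @inner ℂ _ _ x y

/-!
The second equation says `F = B† E - l`, where `B : M → V` and `l ∈ M` are the Riesz representatives
of `a` and `ℓ`. Substituting into the first one leaves `(A + B B†) E = r + B l` with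
`A = δ + η² γ† γ`. Since `B B†` is positive and `A` is bounded below by `δ`, this operator is
bijective by Lax–Milgram, so `E`, and with it `F`, exists and is unique.
-/

section BoundedSemilinear

variable {E F : Type*} [SeminormedAddCommGroup E] [SeminormedAddCommGroup F]

theorem exists_continuousLinearMap_eq_of_map_smul_add {R S : Type*} [Ring R] [Ring S]
    [Module R E] [Module S F] {σ : R →+* S} {g : E → F} {C : ℝ}
    (hg : ∀ (c : R) (x y : E), g (c • x + y) = σ c • g x + g y) (hC : ∀ x, ‖g x‖ ≤ C * ‖x‖) :
    ∃ G : E →SL[σ] F, ∀ x, G x = g x := by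
  have g_zero : g 0 = 0 := by simpa using hg 1 0 0
  let G₀ : E →ₛₗ[σ] F :=
    { toFun := g
      map_add' := fun x y => by simpa using hg 1 x y
      map_smul' := fun c x => by simpa [g_zero] using hg c x 0 }
  exact ⟨G₀.mkContinuous C hC, fun _ => rfl⟩

theorem exists_sesqForm_eq_of_map_smul_add {𝕜 E' : Type*} [NontriviallyNormedField 𝕜]
    [SeminormedAddCommGroup E'] [NormedSpace 𝕜 E] [NormedSpace 𝕜 E'] [NormedSpace 𝕜 F]
    {σ τ : 𝕜 →+* 𝕜} [RingHomIsometric σ] {b : E → E' → F} {C : ℝ}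
    (hb_left : ∀ (c : 𝕜) (x x' : E) (y : E'), b (c • x + x') y = σ c • b x y + b x' y)
    (hb_right : ∀ (c : 𝕜) (x : E) (y y' : E'), b x (c • y + y') = τ c • b x y + b x y')
    (hC : ∀ x y, ‖b x y‖ ≤ C * ‖x‖ * ‖y‖) :
    ∃ S : E' →SL[τ] E →SL[σ] F, ∀ x y, S y x = b x y := by
  have bound (x : E) (y : E') : ‖b x y‖ ≤ |C| * ‖y‖ * ‖x‖ :=
    calc ‖b x y‖ ≤ C * ‖x‖ * ‖y‖ := hC x y
      _ ≤ |C| * ‖x‖ * ‖y‖ := by gcongr; exact le_abs_self C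
      _ = |C| * ‖y‖ * ‖x‖ := by ring
  choose s hs using fun y => exists_continuousLinearMap_eq_of_map_smul_add (σ := σ)
    (fun c x x' => hb_left c x x' y) (fun x => bound x y)
  obtain ⟨S, hS⟩ := exists_continuousLinearMap_eq_of_map_smul_add (σ := τ) (g := s) (C := |C|)
    (fun c y y' => by ext x; simp [hs, hb_right])
    (fun y => (s y).opNorm_le_bound (by positivity) fun x => by rw [hs]; exact bound x y)
  exact ⟨S, fun x y => by rw [hS, hs]⟩

end BoundedSemilinear

section SesqFormOperator

variable {𝕜 E F : Type*} [RCLike 𝕜] [NormedAddCommGroup E] [InnerProductSpace 𝕜 E]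
  [CompleteSpace E] [SeminormedAddCommGroup F]

/-- The operator `F → E` representing a bounded sesquilinear form on `F × E`; the version of
`InnerProductSpace.continuousLinearMapOfBilin` for two different spaces. For the form
`toSesqForm γ` of an operator `γ : E →L[𝕜] F` it is the adjoint of `γ`, also when `F` is not
complete and `ContinuousLinearMap.adjoint` is unavailable. -/
noncomputable def sesqFormOperator [NormedSpace 𝕜 F] (s : F →L⋆[𝕜] E →L[𝕜] 𝕜) : F →L[𝕜] E :=
  (InnerProductSpace.toDual 𝕜 E).symm.toContinuousLinearEquiv.toContinuousLinearMap.comp s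

theorem inner_sesqFormOperator_left [NormedSpace 𝕜 F] (s : F →L⋆[𝕜] E →L[𝕜] 𝕜) (y : F) (x : E) :
    inner 𝕜 (sesqFormOperator s y) x = s y x := by
  simp [sesqFormOperator]

theorem inner_sesqFormOperator_right [NormedSpace 𝕜 F] (s : F →L⋆[𝕜] E →L[𝕜] 𝕜) (x : E) (y : F) :
    inner 𝕜 x (sesqFormOperator s y) = conj (s y x) := by
  rw [← inner_conj_symm, inner_sesqFormOperator_left]

theorem inner_sesqFormOperator_toSesqForm_right [InnerProductSpace 𝕜 F] (γ : E →L[𝕜] F)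
    (x : E) (y : F) :
    inner 𝕜 x (sesqFormOperator (ContinuousLinearMap.toSesqForm γ) y) = inner 𝕜 (γ x) y := by
  rw [inner_sesqFormOperator_right, ContinuousLinearMap.toSesqForm_apply_coe,
    ContinuousLinearMap.comp_apply, innerSL_apply_apply, inner_conj_symm]

theorem exists_inner_right_eq_of_conjLinear (ℓ : E →L⋆[𝕜] 𝕜) : ∃ l : E, ∀ x, inner 𝕜 x l = ℓ x := by
  let conjℓ : E →L[𝕜] 𝕜 := (starL 𝕜 : 𝕜 ≃L⋆[𝕜] 𝕜).toContinuousLinearMap.comp ℓ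
  refine ⟨(InnerProductSpace.toDual 𝕜 E).symm conjℓ, fun x => ?_⟩
  rw [← inner_conj_symm, InnerProductSpace.toDual_symm_apply]
  exact star_star (ℓ x)

end SesqFormOperator

section Coercive

variable {𝕜 V Q : Type*} [RCLike 𝕜] [NormedAddCommGroup V] [InnerProductSpace 𝕜 V]
  [CompleteSpace V] [NormedAddCommGroup Q] [InnerProductSpace 𝕜 Q] [CompleteSpace Q]

theorem bijective_of_le_re_inner {T : V →L[𝕜] V} {c : ℝ} (hc : 0 < c)
    (hT : ∀ x, c * ‖x‖ ^ 2 ≤ RCLike.re (inner 𝕜 x (T x))) : Function.Bijective T := by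
  refine ContinuousLinearMap.isUnit_iff_bijective.mp <|
    T.isUnit_of_forall_le_norm_inner_map (c := ⟨c, hc.le⟩) hc fun x => ?_
  calc ‖x‖ ^ 2 * c = c * ‖x‖ ^ 2 := mul_comm _ _
    _ ≤ RCLike.re (inner 𝕜 x (T x)) := hT x
    _ ≤ ‖inner 𝕜 x (T x)‖ := RCLike.re_le_norm _
    _ = ‖inner 𝕜 (T x) x‖ := norm_inner_symm _ _

theorem bijective_add_comp_adjoint_of_le_re_inner {A : V →L[𝕜] V} {c : ℝ} (hc : 0 < c)
    (hA : ∀ x, c * ‖x‖ ^ 2 ≤ RCLike.re (inner 𝕜 x (A x))) (B : Q →L[𝕜] V) :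
    Function.Bijective (A + B ∘L B.adjoint) := by
  refine bijective_of_le_re_inner hc fun x => (hA x).trans ?_
  have inner_comp_adjoint : inner 𝕜 x (B (B.adjoint x)) = inner 𝕜 (B.adjoint x) (B.adjoint x) :=
    (B.adjoint_inner_left _ _).symm
  rw [add_apply, inner_add_right, map_add, ContinuousLinearMap.comp_apply,
    inner_comp_adjoint]
  exact le_add_of_nonneg_right inner_self_nonneg

theorem existsUnique_saddlePoint_of_le_re_inner {A : V →L[𝕜] V} {c : ℝ} (hc : 0 < c)
    (hA : ∀ x, c * ‖x‖ ^ 2 ≤ RCLike.re (inner 𝕜 x (A x))) (B : Q →L[𝕜] V) (r : V) (l : Q) :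
    ∃! p : V × Q, A p.1 + B p.2 = r ∧ B.adjoint p.1 - p.2 = l := by
  have elimination (E : V) (F : Q) :
      (A E + B F = r ∧ B.adjoint E - F = l) ↔
        (A + B ∘L B.adjoint) E = r + B l ∧ F = B.adjoint E - l := by
    rw [sub_eq_iff_eq_add, ← sub_eq_iff_eq_add', eq_comm (b := F)]
    refine and_congr_left fun hF => ?_
    rw [hF, map_sub, ← add_sub_assoc, sub_eq_iff_eq_add, add_apply,
      ContinuousLinearMap.comp_apply]
  obtain ⟨E, hE, hE_unique⟩ :=
    (bijective_add_comp_adjoint_of_le_re_inner hc hA B).existsUnique (r + B l)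
  refine ⟨(E, B.adjoint E - l), (elimination _ _).mpr ⟨hE, rfl⟩, ?_⟩
  rintro ⟨E', F'⟩ h
  obtain ⟨hE', hF'⟩ := (elimination _ _).mp h
  obtain rfl := hE_unique E' hE'
  exact Prod.ext rfl hF'

end Coercive

section RelaxedQR

variable {𝕜 V L : Type*} [RCLike 𝕜] [NormedAddCommGroup V] [InnerProductSpace 𝕜 V]
  [CompleteSpace V] [SeminormedAddCommGroup L] [InnerProductSpace 𝕜 L]

/-- The Tikhonov operator `δ + η² γ† γ` of the regularized least-squares functional
`E ↦ δ ‖E‖² + η² ‖γ E - f‖²`. The adjoint `γ†` is the one given by `sesqFormOperator`. -/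
noncomputable def tikhonovOperator (γ : V →L[𝕜] L) (δ η : ℝ) : V →L[𝕜] V :=
  (δ : 𝕜) • ContinuousLinearMap.id 𝕜 V +
    (η : 𝕜) ^ 2 • (sesqFormOperator (ContinuousLinearMap.toSesqForm γ) ∘L γ)

theorem inner_tikhonovOperator_right (γ : V →L[𝕜] L) (δ η : ℝ) (x y : V) :
    inner 𝕜 x (tikhonovOperator γ δ η y) =
      (δ : 𝕜) * inner 𝕜 x y + (η : 𝕜) ^ 2 * inner 𝕜 (γ x) (γ y) := by
  simp [tikhonovOperator, inner_add_right, inner_smul_right,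
    inner_sesqFormOperator_toSesqForm_right, -ContinuousLinearMap.toSesqForm_apply_coe]

theorem le_re_inner_tikhonovOperator (γ : V →L[𝕜] L) (δ η : ℝ) (x : V) :
    δ * ‖x‖ ^ 2 ≤ RCLike.re (inner 𝕜 x (tikhonovOperator γ δ η x)) :=
  calc δ * ‖x‖ ^ 2 ≤ δ * ‖x‖ ^ 2 + η ^ 2 * ‖γ x‖ ^ 2 := le_add_of_nonneg_right (by positivity)
    _ = RCLike.re (inner 𝕜 x (tikhonovOperator γ δ η x)) := by
      rw [inner_tikhonovOperator_right, inner_self_eq_norm_sq_to_K, inner_self_eq_norm_sq_to_K]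
      norm_cast

theorem existsUnique_relaxedQR_of_sesqForm {Q : Type*} [NormedAddCommGroup Q]
    [InnerProductSpace 𝕜 Q] [CompleteSpace Q] (a : Q →L⋆[𝕜] V →L[𝕜] 𝕜) (γ : V →L[𝕜] L) (f : L)
    (ℓ : Q →L⋆[𝕜] 𝕜) {δ : ℝ} (η : ℝ) (hδ : 0 < δ) :
    ∃! p : V × Q,
      (∀ φ : V, (δ : 𝕜) * inner 𝕜 φ p.1 + (η : 𝕜) ^ 2 * inner 𝕜 (γ φ) (γ p.1 - f)
        + conj (a p.2 φ) = 0) ∧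
      ∀ ψ : Q, a ψ p.1 - inner 𝕜 ψ p.2 = ℓ ψ := by
  obtain ⟨l, hl⟩ := exists_inner_right_eq_of_conjLinear ℓ
  let A := tikhonovOperator γ δ η
  let B := sesqFormOperator a
  let r := (η : 𝕜) ^ 2 • sesqFormOperator (ContinuousLinearMap.toSesqForm γ) f
  have optimality_iff (E : V) (F : Q) :
      (∀ φ : V, (δ : 𝕜) * inner 𝕜 φ E + (η : 𝕜) ^ 2 * inner 𝕜 (γ φ) (γ E - f)
        + conj (a F φ) = 0) ↔ A E + B F = r := by
    rw [ext_iff_inner_left 𝕜]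
    refine forall_congr' fun φ => ?_
    rw [inner_add_right, inner_tikhonovOperator_right, inner_sesqFormOperator_right,
      inner_smul_right, inner_sesqFormOperator_toSesqForm_right, inner_sub_right,
      ← sub_eq_zero (b := (η : 𝕜) ^ 2 * inner 𝕜 (γ φ) f)]
    ring_nf
  have constraint_iff (E : V) (F : Q) :
      (∀ ψ : Q, a ψ E - inner 𝕜 ψ F = ℓ ψ) ↔ B.adjoint E - F = l := by
    rw [ext_iff_inner_left 𝕜]
    refine forall_congr' fun ψ => ?_
    rw [inner_sub_right, B.adjoint_inner_right, inner_sesqFormOperator_left, hl]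
  simp only [optimality_iff, constraint_iff]
  exact existsUnique_saddlePoint_of_le_re_inner hδ (le_re_inner_tikhonovOperator γ δ η) B r l

theorem relaxed_qr_wellposed_general
    (M : Submodule 𝕜 V) (hM : IsClosed (M : Set V))
    (a : V → V → 𝕜)
    (ha_lin : ∀ (c : 𝕜) (u u' v : V), v ∈ M → a (c • u + u') v = c * a u v + a u' v)
    (ha_conj : ∀ (c : 𝕜) (u v v' : V), v ∈ M → v' ∈ M →
      a u (c • v + v') = conj c * a u v + a u v')
    (ha_bdd : ∃ C : ℝ, ∀ (u v : V), v ∈ M → ‖a u v‖ ≤ C * ‖u‖ * ‖v‖)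
    (γ : V →L[𝕜] L) (f : L)
    (ℓ : V → 𝕜)
    (hℓ_conj : ∀ (c : 𝕜) (v w : V), v ∈ M → w ∈ M → ℓ (c • v + w) = conj c * ℓ v + ℓ w)
    (hℓ_bdd : ∃ C : ℝ, ∀ v ∈ M, ‖ℓ v‖ ≤ C * ‖v‖)
    (δ η : ℝ) (hδ : 0 < δ) :
    ∃! p : V × V, p.2 ∈ M ∧
      (∀ φ : V, (δ : 𝕜) * inner 𝕜 φ p.1 + (η : 𝕜) ^ 2 * inner 𝕜 (γ φ) (γ p.1 - f)
        + conj (a φ p.2) = 0) ∧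
      (∀ ψ ∈ M, a p.1 ψ - inner 𝕜 ψ p.2 = ℓ ψ) := by
  have : CompleteSpace M := hM.completeSpace_coe
  obtain ⟨Ca, hCa⟩ := ha_bdd
  obtain ⟨Cℓ, hCℓ⟩ := hℓ_bdd
  obtain ⟨s, hs⟩ := exists_sesqForm_eq_of_map_smul_add (σ := RingHom.id 𝕜) (τ := starRingEnd 𝕜)
    (b := fun (u : V) (v : M) => a u v) (fun c u u' v => ha_lin c u u' v v.2)
    (fun c u v v' => ha_conj c u v v' v.2 v'.2) (fun u v => hCa u v v.2)
  obtain ⟨k, hk⟩ := exists_continuousLinearMap_eq_of_map_smul_add (σ := starRingEnd 𝕜)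
    (g := fun v : M => ℓ v) (fun c v w => hℓ_conj c v w v.2 w.2) (fun v => hCℓ v v.2)
  obtain ⟨⟨E, F⟩, hEF, hEF_unique⟩ := existsUnique_relaxedQR_of_sesqForm s γ f k η hδ
  simp only [hs, hk, Subtype.forall] at hEF hEF_unique
  refine ⟨(E, F), ⟨F.2, hEF⟩, ?_⟩
  rintro ⟨E', F'⟩ ⟨hF', h⟩
  obtain ⟨hE, hF⟩ := Prod.ext_iff.mp (hEF_unique (E', ⟨F', hF'⟩) h)
  exact Prod.ext hE (congrArg Subtype.val hF)

end RelaxedQR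

/-- for every `δ > 0` and `η > 0`, the relaxed QR problem admits exactly
one solution `(E_α, F_α) ∈ V × M`. (Paper inner products `⟨u,φ⟩` are linear in the
first argument, hence written as `⟪φ, u⟫` in Mathlib's convention.) -/
theorem relaxed_qr_wellposed
    {V L : Type*} [NormedAddCommGroup V] [InnerProductSpace ℂ V] [CompleteSpace V]
    [NormedAddCommGroup L] [InnerProductSpace ℂ L] [CompleteSpace L]
    (M : Submodule ℂ V) (hM : IsClosed (M : Set V))
    (a : V → V → ℂ)
    (ha_lin : ∀ (c : ℂ) (u u' v : V), v ∈ M → a (c • u + u') v = c * a u v + a u' v)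
    (ha_conj : ∀ (c : ℂ) (u v v' : V), v ∈ M → v' ∈ M →
      a u (c • v + v') = conj c * a u v + a u v')
    (ha_bdd : ∃ C : ℝ, ∀ (u v : V), v ∈ M → ‖a u v‖ ≤ C * ‖u‖ * ‖v‖)
    (γ : V →L[ℂ] L) (f : L)
    (ℓ : V → ℂ)
    (hℓ_conj : ∀ (c : ℂ) (v w : V), v ∈ M → w ∈ M → ℓ (c • v + w) = conj c * ℓ v + ℓ w)
    (hℓ_bdd : ∃ C : ℝ, ∀ v ∈ M, ‖ℓ v‖ ≤ C * ‖v‖)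
    (δ η : ℝ) (hδ : 0 < δ) (hη : 0 < η) :
    ∃! p : V × V, p.2 ∈ M ∧
      (∀ φ : V, (δ : ℂ) * ⟪φ, p.1⟫ + (η : ℂ) ^ 2 * ⟪γ φ, γ p.1 - f⟫ + conj (a φ p.2) = 0) ∧
      (∀ ψ ∈ M, a p.1 ψ - ⟪ψ, p.2⟫ = ℓ ψ) := by
  exact relaxed_qr_wellposed_general M hM a ha_lin ha_conj ha_bdd γ f ℓ hℓ_conj hℓ_bdd δ η hδ
end

section
/- Suppose there exists E ∈ V with γE = f and a(E, ψ) = ℓ(ψ) for all ψ ∈ M. Let δ, η > 0 and let (E_α, F_α) ∈ V × M be a solution of the relaxed QR problem. Then the fundamental relation δ⟨E_α, E_α − E⟩_V + η²‖γE_α − f‖_L² + ‖F_α‖_V² = 0 holds, and consequently ‖E_α‖_V ≤ ‖E‖_V (a bound independent of both δ and η). -/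
open ComplexConjugate

local notation "⟪" x ", " y "⟫" => @inner ℂ _ _ x y

/-! Compare the regularized solution with the exact one through the error `e = Eα - E`. Since
`γ E = f`, the error has trace `γ Eα - f`; subtracting the equation of `E` from the second relaxed
equation gives `a(e, ψ) = ⟨Fα, ψ⟩`. Testing the first relaxed equation with `e`
therefore turns its last two terms into squared norms, whence `Re ⟨Eα, Eα - E⟩ ≤ 0`, and
Cauchy-Schwarz bounds `‖Eα‖` by `‖E‖`. -/

section RelaxedQR

variable {𝕜 V W L : Type*} [RCLike 𝕜]
  [SeminormedAddCommGroup V] [InnerProductSpace 𝕜 V]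
  [SeminormedAddCommGroup W] [InnerProductSpace 𝕜 W]
  [SeminormedAddCommGroup L] [InnerProductSpace 𝕜 L]

theorem norm_le_norm_of_re_inner_sub_nonpos {x y : V}
    (h : RCLike.re (inner 𝕜 (x - y) x) ≤ 0) : ‖x‖ ≤ ‖y‖ := by
  have hsq : ‖x‖ * ‖x‖ ≤ ‖y‖ * ‖x‖ := by
    calc ‖x‖ * ‖x‖ = RCLike.re (inner 𝕜 x x) := (inner_self_eq_norm_mul_norm x).symm
      _ ≤ RCLike.re (inner 𝕜 y x) := by simpa only [inner_sub_left, map_sub, sub_nonpos] using h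
      _ ≤ ‖y‖ * ‖x‖ := re_inner_le_norm y x
  rcases (norm_nonneg x).eq_or_lt with hx | hx
  · exact hx ▸ norm_nonneg y
  · exact le_of_mul_le_mul_right hsq hx

/-- `(Eα, Fα)` solves the relaxed quasi-reversibility problem with form `a`, trace `γ`, data `f`
and `ℓ`, and parameters `δ`, `η`. The test space `M` is encoded as a type `W` of its own, and
Mathlib's inner product is conjugate-linear in its first argument, so `inner 𝕜 y x` is the
`⟨x, y⟩` of the paper. -/
structure IsRelaxedQRSolution (a : V →+ W → 𝕜) (γ : V →+ L) (f : L) (ℓ : W → 𝕜) (δ η : ℝ)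
    (Eα : V) (Fα : W) : Prop where
  regularized_eq (φ : V) :
    (δ : 𝕜) * inner 𝕜 φ Eα + (η : 𝕜) ^ 2 * inner 𝕜 (γ φ) (γ Eα - f) + conj (a φ Fα) = 0
  constraint_eq (ψ : W) : a Eα ψ - inner 𝕜 ψ Fα = ℓ ψ

namespace IsRelaxedQRSolution

variable {a : V →+ W → 𝕜} {γ : V →+ L} {f : L} {ℓ : W → 𝕜} {δ η : ℝ} {Eα E : V} {Fα : W}

theorem apply_sub_eq_inner (h : IsRelaxedQRSolution a γ f ℓ δ η Eα Fα) (hE : a E = ℓ) (ψ : W) :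
    a (Eα - E) ψ = inner 𝕜 ψ Fα := by
  rw [map_sub, Pi.sub_apply, hE, ← h.constraint_eq ψ, sub_sub_cancel]

theorem inner_sub_add_norm_sq_eq_zero (h : IsRelaxedQRSolution a γ f ℓ δ η Eα Fα)
    (hγ : γ E = f) (hE : a E = ℓ) :
    (δ : 𝕜) * inner 𝕜 (Eα - E) Eα + ((η ^ 2 * ‖γ Eα - f‖ ^ 2 : ℝ) : 𝕜)
      + ((‖Fα‖ ^ 2 : ℝ) : 𝕜) = 0 := by
  have trace_error : γ (Eα - E) = γ Eα - f := by rw [map_sub, hγ]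
  have tested := h.regularized_eq (Eα - E)
  rw [trace_error, h.apply_sub_eq_inner hE, inner_conj_symm, inner_self_eq_norm_sq_to_K,
    inner_self_eq_norm_sq_to_K] at tested
  exact_mod_cast tested

theorem re_inner_sub_nonpos (h : IsRelaxedQRSolution a γ f ℓ δ η Eα Fα)
    (hγ : γ E = f) (hE : a E = ℓ) (hδ : 0 < δ) :
    RCLike.re (inner 𝕜 (Eα - E) Eα) ≤ 0 := by
  have re_relation := congrArg RCLike.re (h.inner_sub_add_norm_sq_eq_zero hγ hE)
  simp only [map_add, RCLike.re_ofReal_mul, RCLike.ofReal_re, map_zero] at re_relation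
  have residual_nonneg : 0 ≤ η ^ 2 * ‖γ Eα - f‖ ^ 2 + ‖Fα‖ ^ 2 := by positivity
  exact nonpos_of_mul_nonpos_right (by linarith) hδ

end IsRelaxedQRSolution

theorem relaxed_qr_fundamental_relation_general
    {a : V →+ W → 𝕜} {γ : V →+ L} {f : L} {ℓ : W → 𝕜} {δ η : ℝ} {Eα E : V} {Fα : W}
    (h : IsRelaxedQRSolution a γ f ℓ δ η Eα Fα) (hγ : γ E = f) (hE : a E = ℓ) (hδ : 0 < δ) :
    (δ : 𝕜) * inner 𝕜 (Eα - E) Eα + ((η ^ 2 * ‖γ Eα - f‖ ^ 2 : ℝ) : 𝕜)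
      + ((‖Fα‖ ^ 2 : ℝ) : 𝕜) = 0 ∧ ‖Eα‖ ≤ ‖E‖ :=
  ⟨h.inner_sub_add_norm_sq_eq_zero hγ hE,
    norm_le_norm_of_re_inner_sub_nonpos (h.re_inner_sub_nonpos hγ hE hδ)⟩

end RelaxedQR

/-- the fundamental relation
`δ⟨E_α, E_α − E⟩_V + η²‖γE_α − f‖_L² + ‖F_α‖_V² = 0` and the resulting bound
`‖E_α‖_V ≤ ‖E‖_V`, independent of both `δ` and `η`. -/
theorem relaxed_qr_fundamental_relation
    {V L : Type*} [NormedAddCommGroup V] [InnerProductSpace ℂ V] [CompleteSpace V]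
    [NormedAddCommGroup L] [InnerProductSpace ℂ L] [CompleteSpace L]
    (M : Submodule ℂ V) (hM : IsClosed (M : Set V))
    (a : V → V → ℂ)
    (ha_lin : ∀ (c : ℂ) (u u' v : V), v ∈ M → a (c • u + u') v = c * a u v + a u' v)
    (ha_conj : ∀ (c : ℂ) (u v v' : V), v ∈ M → v' ∈ M →
      a u (c • v + v') = conj c * a u v + a u v')
    (ha_bdd : ∃ C : ℝ, ∀ (u v : V), v ∈ M → ‖a u v‖ ≤ C * ‖u‖ * ‖v‖)
    (γ : V →L[ℂ] L) (f : L)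
    (ℓ : V → ℂ)
    (hℓ_conj : ∀ (c : ℂ) (v w : V), v ∈ M → w ∈ M → ℓ (c • v + w) = conj c * ℓ v + ℓ w)
    (hℓ_bdd : ∃ C : ℝ, ∀ v ∈ M, ‖ℓ v‖ ≤ C * ‖v‖)
    (E : V) (hE_trace : γ E = f) (hE_eq : ∀ ψ ∈ M, a E ψ = ℓ ψ)
    (δ η : ℝ) (hδ : 0 < δ) (hη : 0 < η)
    (Eα Fα : V) (hFα_mem : Fα ∈ M)
    (h_eq1 : ∀ φ : V, (δ : ℂ) * ⟪φ, Eα⟫ + (η : ℂ) ^ 2 * ⟪γ φ, γ Eα - f⟫ + conj (a φ Fα) = 0)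
    (h_eq2 : ∀ ψ ∈ M, a Eα ψ - ⟪ψ, Fα⟫ = ℓ ψ) :
    (δ : ℂ) * ⟪Eα - E, Eα⟫ + ((η ^ 2 * ‖γ Eα - f‖ ^ 2 : ℝ) : ℂ) + ((‖Fα‖ ^ 2 : ℝ) : ℂ) = 0 ∧
    ‖Eα‖ ≤ ‖E‖ := by
  let aM : V →+ M → ℂ := AddMonoidHom.mk' (fun u ψ ↦ a u ψ) fun u u' ↦ by
    ext ψ
    simpa using ha_lin 1 u u' ψ ψ.2
  have solution : IsRelaxedQRSolution aM (γ : V →+ L) f (fun ψ : M ↦ ℓ ψ) δ η Eα ⟨Fα, hFα_mem⟩ :=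
    ⟨h_eq1, fun ψ ↦ h_eq2 ψ ψ.2⟩
  exact relaxed_qr_fundamental_relation_general solution hE_trace
    (funext fun ψ ↦ hE_eq ψ ψ.2) hδ
end

section
/- Suppose there exists E ∈ V with γE = f and a(E, ψ) = ℓ(ψ) for all ψ ∈ M. Let δ, η > 0 and let (E_α, F_α) ∈ V × M be a solution of the relaxed QR problem. Then ‖F_α‖_V ≤ √δ · ‖E‖_V and ‖γE_α − f‖_L ≤ (√δ / η) · ‖E‖_V. (Estimates (4.5) and (4.6) of Theorem 4.1.) -/
open ComplexConjugate

local notation "⟪" x ", " y "⟫" => @inner ℂ _ _ x y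

/-!
Test the first equation with the error `Eα - E` and take real parts. Since `a (Eα - E) Fα = ‖Fα‖²`
and `γ (Eα - E) = γ Eα - f`, polarization of `⟪Eα - E, Eα⟫` turns it into the energy identity
`δ ‖2 Eα - E‖² + 4 η² ‖γ Eα - f‖² + 4 ‖Fα‖² = δ ‖E‖²`,
from which both estimates follow, even with an additional factor `1/2`.
-/

section

variable {𝕜 V W L : Type*} [RCLike 𝕜]
  [SeminormedAddCommGroup V] [InnerProductSpace 𝕜 V]
  [SeminormedAddCommGroup W] [InnerProductSpace 𝕜 W]
  [SeminormedAddCommGroup L] [InnerProductSpace 𝕜 L]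
  {a : V →+ W → 𝕜} {γ : V →+ L} {f : L} {ℓ : W → 𝕜} {δ η : ℝ} {E Eα : V} {Fα : W}

/-- `(Eα, Fα)` solves the relaxed quasi-reversibility problem with parameters `(δ, η)`, form `a`,
trace `γ`, boundary datum `f` and right-hand side `ℓ`. The space `W` plays the role of `M`, with
its own inner product in place of the one inherited from `V`. Mathlib's inner product is
conjugate-linear in the first variable, so `⟨Eα, φ⟩` becomes `inner 𝕜 φ Eα`. -/
structure IsRelaxedQRSolution_s8 (a : V →+ W → 𝕜) (γ : V →+ L) (f : L) (ℓ : W → 𝕜) (δ η : ℝ)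
    (Eα : V) (Fα : W) : Prop where
  primal_eq : ∀ φ : V,
    (δ : 𝕜) * inner 𝕜 φ Eα + (η : 𝕜) ^ 2 * inner 𝕜 (γ φ) (γ Eα - f) + conj (a φ Fα) = 0
  dual_eq : ∀ ψ : W, a Eα ψ - inner 𝕜 ψ Fα = ℓ ψ

namespace IsRelaxedQRSolution_s8

theorem form_error_eq_norm_sq (h : IsRelaxedQRSolution_s8 a γ f ℓ δ η Eα Fα) (hE : a E = ℓ) :
    a (Eα - E) Fα = (‖Fα‖ : 𝕜) ^ 2 := by
  rw [map_sub, hE, Pi.sub_apply, ← h.dual_eq, sub_sub_cancel, inner_self_eq_norm_sq_to_K]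

theorem re_inner_error_add_norm_sq_eq_zero (h : IsRelaxedQRSolution_s8 a γ f ℓ δ η Eα Fα)
    (hγE : γ E = f) (hE : a E = ℓ) :
    δ * RCLike.re (inner 𝕜 (Eα - E) Eα) + η ^ 2 * ‖γ Eα - f‖ ^ 2 + ‖Fα‖ ^ 2 = 0 := by
  have tested_eq := h.primal_eq (Eα - E)
  rw [h.form_error_eq_norm_sq hE, map_sub γ, hγE, inner_self_eq_norm_sq_to_K, map_pow,
    RCLike.conj_ofReal] at tested_eq
  norm_cast at tested_eq
  simpa only [map_add, RCLike.re_ofReal_mul, RCLike.ofReal_re, map_zero]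
    using congrArg RCLike.re tested_eq

theorem energy_identity (h : IsRelaxedQRSolution_s8 a γ f ℓ δ η Eα Fα)
    (hγE : γ E = f) (hE : a E = ℓ) :
    δ * ‖Eα - E + Eα‖ ^ 2 + 4 * (η * ‖γ Eα - f‖) ^ 2 + 4 * ‖Fα‖ ^ 2 = δ * ‖E‖ ^ 2 := by
  have polarization : RCLike.re (inner 𝕜 (Eα - E) Eα) = (‖Eα - E + Eα‖ ^ 2 - ‖E‖ ^ 2) / 4 := by
    rw [re_inner_eq_norm_add_mul_self_sub_norm_sub_mul_self_div_four, sub_sub_cancel_left,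
      norm_neg, sq, sq]
  have real_part_eq := h.re_inner_error_add_norm_sq_eq_zero hγE hE
  rw [polarization] at real_part_eq
  linear_combination 4 * real_part_eq

end IsRelaxedQRSolution_s8

theorem le_sqrt_mul_div_two_of_four_mul_sq_le {c x y : ℝ} (hc : 0 ≤ c) (hx : 0 ≤ x)
    (h : 4 * y ^ 2 ≤ c * x ^ 2) : y ≤ √c * x / 2 := by
  have two_mul_le : 2 * y ≤ √(c * x ^ 2) := Real.le_sqrt_of_sq_le (by linarith)
  rw [Real.sqrt_mul hc, Real.sqrt_sq hx] at two_mul_le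
  linarith

theorem relaxed_qr_estimates_general (h : IsRelaxedQRSolution_s8 a γ f ℓ δ η Eα Fα)
    (hγE : γ E = f) (hE : a E = ℓ) (hδ : 0 ≤ δ) (hη : 0 < η) :
    ‖Fα‖ ≤ √δ * ‖E‖ / 2 ∧ ‖γ Eα - f‖ ≤ √δ / η * ‖E‖ / 2 := by
  have energy := h.energy_identity hγE hE
  have error_nonneg : 0 ≤ δ * ‖Eα - E + Eα‖ ^ 2 := by positivity
  constructor
  · apply le_sqrt_mul_div_two_of_four_mul_sq_le hδ (norm_nonneg E)
    linarith [sq_nonneg (η * ‖γ Eα - f‖)]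
  · have scaled_bound : η * ‖γ Eα - f‖ ≤ √δ * ‖E‖ / 2 := by
      apply le_sqrt_mul_div_two_of_four_mul_sq_le hδ (norm_nonneg E)
      linarith [sq_nonneg ‖Fα‖]
    calc
      ‖γ Eα - f‖ ≤ √δ * ‖E‖ / 2 / η := (le_div_iff₀' hη).mpr scaled_bound
      _ = √δ / η * ‖E‖ / 2 := by ring

end

/-- estimates (4.5) and (4.6):
`‖F_α‖_V ≤ √δ ‖E‖_V` and `‖γE_α − f‖_L ≤ (√δ/η) ‖E‖_V` for any solution of the
relaxed QR problem. -/
theorem relaxed_qr_estimates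
    {V L : Type*} [NormedAddCommGroup V] [InnerProductSpace ℂ V] [CompleteSpace V]
    [NormedAddCommGroup L] [InnerProductSpace ℂ L] [CompleteSpace L]
    (M : Submodule ℂ V) (hM : IsClosed (M : Set V))
    (a : V → V → ℂ)
    (ha_lin : ∀ (c : ℂ) (u u' v : V), v ∈ M → a (c • u + u') v = c * a u v + a u' v)
    (ha_conj : ∀ (c : ℂ) (u v v' : V), v ∈ M → v' ∈ M →
      a u (c • v + v') = conj c * a u v + a u v')
    (ha_bdd : ∃ C : ℝ, ∀ (u v : V), v ∈ M → ‖a u v‖ ≤ C * ‖u‖ * ‖v‖)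
    (γ : V →L[ℂ] L) (f : L)
    (ℓ : V → ℂ)
    (hℓ_conj : ∀ (c : ℂ) (v w : V), v ∈ M → w ∈ M → ℓ (c • v + w) = conj c * ℓ v + ℓ w)
    (hℓ_bdd : ∃ C : ℝ, ∀ v ∈ M, ‖ℓ v‖ ≤ C * ‖v‖)
    (E : V) (hE_trace : γ E = f) (hE_eq : ∀ ψ ∈ M, a E ψ = ℓ ψ)
    (δ η : ℝ) (hδ : 0 < δ) (hη : 0 < η)
    (Eα Fα : V) (hFα_mem : Fα ∈ M)
    (h_eq1 : ∀ φ : V, (δ : ℂ) * ⟪φ, Eα⟫ + (η : ℂ) ^ 2 * ⟪γ φ, γ Eα - f⟫ + conj (a φ Fα) = 0)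
    (h_eq2 : ∀ ψ ∈ M, a Eα ψ - ⟪ψ, Fα⟫ = ℓ ψ) :
    ‖Fα‖ ≤ Real.sqrt δ * ‖E‖ ∧
    ‖γ Eα - f‖ ≤ (Real.sqrt δ / η) * ‖E‖ := by
  let form : V →+ M → ℂ := .mk' (fun u v ↦ a u v) fun u u' ↦ funext fun v ↦ by
    simpa using ha_lin 1 u u' v v.2
  have sol : IsRelaxedQRSolution_s8 form γ f (fun ψ : M ↦ ℓ ψ) δ η Eα ⟨Fα, hFα_mem⟩ :=
    ⟨h_eq1, fun ψ ↦ h_eq2 ψ ψ.2⟩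
  have exact_eq : form E = fun ψ : M ↦ ℓ ψ := funext fun ψ ↦ hE_eq ψ ψ.2
  exact (relaxed_qr_estimates_general sol hE_trace exact_eq hδ.le hη).imp
    (·.trans (half_le_self (by positivity))) (·.trans (half_le_self (by positivity)))
end

section
/- Suppose E is the unique element of V satisfying γE = f and a(E, ψ) = ℓ(ψ) for all ψ ∈ M (i.e. any Ẽ ∈ V with γẼ = f and a(Ẽ, ψ) = ℓ(ψ) for all ψ ∈ M equals E). Fix η > 0, and for each δ > 0 let (E_{(δ,η)}, F_{(δ,η)}) be the unique solution of the relaxed QR problem. Then for every sequence (δ_n) of positive reals with δ_n → 0, one has E_{(δ_n,η)} → E and F_{(δ_n,η)} → 0 in the norm of V. (Abstract form of the convergence part of Theorem 4.1.) -/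
open ComplexConjugate Filter Topology

local notation "⟪" x ", " y "⟫" => @inner ℂ _ _ x y

/-!
The error `e = E_δ - E` satisfies `a(e, ψ) = ⟪ψ, F_δ⟫`, so testing the variational equation with `e`
gives the energy identity `δ (‖e‖² + Re ⟪e, E⟫) + η² ‖γ e‖² + ‖F_δ‖² = 0`. Hence `e` stays bounded
while `F_δ` and `γ e` are `O(√δ)`, and `a(e, ψ) → 0` for every `ψ ∈ M`. Uniqueness of `E` says that
`γ` and the functionals `a(·, ψ)` together separate points, so the bounded family `e` converges
weakly to zero; the identity also gives `‖e‖² ≤ |⟪e, E⟫|`, so the convergence is strong.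
-/

theorem isBoundedLinearMap_of_map_smul_add {𝕜 V W : Type*} [NontriviallyNormedField 𝕜]
    [NormedAddCommGroup V] [NormedSpace 𝕜 V] [NormedAddCommGroup W] [NormedSpace 𝕜 W]
    {g : V → W} {C : ℝ} (hlin : ∀ (c : 𝕜) (u v : V), g (c • u + v) = c • g u + g v)
    (hbdd : ∀ v, ‖g v‖ ≤ C * ‖v‖) : IsBoundedLinearMap 𝕜 g := by
  have hzero : g 0 = 0 := by simpa using hlin 1 0 0
  refine IsLinearMap.with_bound ⟨fun u v => ?_, fun c u => ?_⟩ C hbdd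
  · simpa using hlin 1 u v
  · simpa [hzero] using hlin c u 0

section WeakConvergence

variable {𝕜 V ι : Type*} [RCLike 𝕜] [NormedAddCommGroup V] [InnerProductSpace 𝕜 V]

variable (𝕜) in
/-- The subspace of those `w` with `⟪w, x i⟫ → 0` along `l`; the family `x` converges weakly to
zero exactly when this subspace is everything. -/
def weaklyNullTests (x : ι → V) (l : Filter ι) : Submodule 𝕜 V where
  carrier := {w | Tendsto (fun i => inner 𝕜 w (x i)) l (𝓝 0)}
  zero_mem' := by simpa using tendsto_const_nhds
  add_mem' hv hw := by simpa [inner_add_left] using hv.add hw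
  smul_mem' c w hw := by simpa [inner_smul_left] using Tendsto.const_mul (conj c) hw

variable {x : ι → V} {l : Filter ι} {C : ℝ}

theorem mem_weaklyNullTests {w : V} :
    w ∈ weaklyNullTests 𝕜 x l ↔ Tendsto (fun i => inner 𝕜 w (x i)) l (𝓝 0) :=
  Iff.rfl

theorem equicontinuous_inner_of_bounded (hx : ∀ i, ‖x i‖ ≤ C) :
    Equicontinuous fun i (w : V) => inner 𝕜 w (x i) := by
  refine (LipschitzWith.uniformEquicontinuous _ C.toNNReal fun i => ?_).equicontinuous
  refine LipschitzWith.of_dist_le_mul fun v w => ?_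
  calc dist (inner 𝕜 v (x i)) (inner 𝕜 w (x i))
      = ‖inner 𝕜 (v - w) (x i)‖ := by rw [dist_eq_norm, inner_sub_left]
    _ ≤ ‖v - w‖ * ‖x i‖ := norm_inner_le_norm _ _
    _ ≤ C.toNNReal * dist v w := by
        rw [mul_comm, dist_eq_norm]
        gcongr
        exact (hx i).trans (Real.le_coe_toNNReal C)

theorem isClosed_weaklyNullTests (hx : ∀ i, ‖x i‖ ≤ C) :
    IsClosed (weaklyNullTests 𝕜 x l : Set V) :=
  (equicontinuous_inner_of_bounded hx).isClosed_setOfPred_tendsto continuous_const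

theorem weaklyNullTests_eq_top [CompleteSpace V] (hx : ∀ i, ‖x i‖ ≤ C)
    (hsep : ∀ u : V,
      (∀ T : StrongDual 𝕜 V, Tendsto (fun i => T (x i)) l (𝓝 0) → T u = 0) → u = 0) :
    weaklyNullTests 𝕜 x l = ⊤ := by
  have horth : (weaklyNullTests 𝕜 x l)ᗮ = ⊥ := by
    refine (Submodule.eq_bot_iff _).2 fun u hu => hsep u fun T hT => ?_
    obtain ⟨w, rfl⟩ := (InnerProductSpace.toDual 𝕜 V).surjective T
    exact (Submodule.mem_orthogonal _ u).1 hu w hT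
  rw [← (isClosed_weaklyNullTests hx).submodule_topologicalClosure_eq]
  exact (Submodule.topologicalClosure_eq_top_iff).2 horth

end WeakConvergence

section RelaxedQR

variable {𝕜 V L : Type*} [RCLike 𝕜] [NormedAddCommGroup V] [InnerProductSpace 𝕜 V]
  [NormedAddCommGroup L] [InnerProductSpace 𝕜 L]

/-- `E` solves the data completion problem: it has trace `f` and satisfies `a(E, ψ) = ℓ(ψ)` for all
`ψ ∈ M`. Only the values of `a` on `V × M` and of `ℓ` on `M` matter, so both are encoded as
functions on all of `V`. -/
structure IsExactSolution (M : Set V) (a : V → V → 𝕜) (γ : V →L[𝕜] L) (f : L) (ℓ : V → 𝕜)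
    (E : V) : Prop where
  trace_eq : γ E = f
  apply_eq : ∀ ψ ∈ M, a E ψ = ℓ ψ

/-- `(p, q)` solves the relaxed QR problem with regularization parameters `(δ, η)`; it is
the pair `(E_α, F_α)` of the paper for `α = (δ, η)`. The data are encoded as in
`IsExactSolution`. -/
structure IsRelaxedQRSolution_s9 (M : Set V) (a : V → V → 𝕜) (γ : V →L[𝕜] L) (f : L) (ℓ : V → 𝕜)
    (δ η : ℝ) (p q : V) : Prop where
  snd_mem : q ∈ M
  variational_eq : ∀ φ : V,
    (δ : 𝕜) * inner 𝕜 φ p + (η : 𝕜) ^ 2 * inner 𝕜 (γ φ) (γ p - f) + conj (a φ q) = 0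
  constraint_eq : ∀ ψ ∈ M, a p ψ - inner 𝕜 ψ q = ℓ ψ

variable {M : Set V} {a : V → V → 𝕜} {γ : V →L[𝕜] L} {f : L} {ℓ : V → 𝕜} {E : V} {η : ℝ}

namespace IsRelaxedQRSolution_s9

variable {δ : ℝ} {p q : V}

theorem apply_sub_eq_inner_s9 (h : IsRelaxedQRSolution_s9 M a γ f ℓ δ η p q)
    (ha : ∀ ψ ∈ M, IsLinearMap 𝕜 fun v => a v ψ) (hE : IsExactSolution M a γ f ℓ E)
    {ψ : V} (hψ : ψ ∈ M) : a (p - E) ψ = inner 𝕜 ψ q := by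
  have hsub : a (p - E) ψ = a p ψ - a E ψ := (ha ψ hψ).map_sub p E
  rw [hsub, hE.apply_eq ψ hψ, ← h.constraint_eq ψ hψ, sub_sub_cancel]

theorem energy_identity_s9 (h : IsRelaxedQRSolution_s9 M a γ f ℓ δ η p q)
    (ha : ∀ ψ ∈ M, IsLinearMap 𝕜 fun v => a v ψ) (hE : IsExactSolution M a γ f ℓ E) :
    δ * (‖p - E‖ ^ 2 + RCLike.re (inner 𝕜 (p - E) E)) + η ^ 2 * ‖γ (p - E)‖ ^ 2 + ‖q‖ ^ 2 = 0 := by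
  have htest := h.variational_eq (p - E)
  have hinner : inner 𝕜 (p - E) p = inner 𝕜 (p - E) (p - E) + inner 𝕜 (p - E) E := by
    rw [← inner_add_right, sub_add_cancel]
  have hresidual : γ p - f = γ (p - E) := by rw [map_sub, hE.trace_eq]
  rw [hinner, hresidual, h.apply_sub_eq_inner_s9 ha hE h.snd_mem, inner_conj_symm] at htest
  simpa only [← RCLike.ofReal_pow, map_add, RCLike.re_ofReal_mul, inner_self_eq_norm_sq, map_zero]
    using congrArg RCLike.re htest

theorem norm_sub_sq_le_norm_inner (h : IsRelaxedQRSolution_s9 M a γ f ℓ δ η p q)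
    (ha : ∀ ψ ∈ M, IsLinearMap 𝕜 fun v => a v ψ) (hE : IsExactSolution M a γ f ℓ E) (hδ : 0 < δ) :
    ‖p - E‖ ^ 2 ≤ ‖inner 𝕜 (p - E) E‖ := by
  have hmul : δ * (‖p - E‖ ^ 2 + RCLike.re (inner 𝕜 (p - E) E)) ≤ 0 := by
    have hnonneg : 0 ≤ η ^ 2 * ‖γ (p - E)‖ ^ 2 + ‖q‖ ^ 2 := by positivity
    linarith [h.energy_identity_s9 ha hE]
  have hsum := nonpos_of_mul_nonpos_right hmul hδ
  have hre := neg_le_of_abs_le (RCLike.abs_re_le_norm (inner 𝕜 (p - E) E))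
  linarith

theorem norm_sub_le (h : IsRelaxedQRSolution_s9 M a γ f ℓ δ η p q)
    (ha : ∀ ψ ∈ M, IsLinearMap 𝕜 fun v => a v ψ) (hE : IsExactSolution M a γ f ℓ E) (hδ : 0 < δ) :
    ‖p - E‖ ≤ ‖E‖ := by
  have hsq := (h.norm_sub_sq_le_norm_inner ha hE hδ).trans (norm_inner_le_norm _ _)
  rw [sq] at hsq
  rcases (norm_nonneg (p - E)).eq_or_lt with hzero | hpos
  · exact hzero ▸ norm_nonneg E
  · exact le_of_mul_le_mul_left hsq hpos

theorem trace_sq_add_snd_sq_le (h : IsRelaxedQRSolution_s9 M a γ f ℓ δ η p q)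
    (ha : ∀ ψ ∈ M, IsLinearMap 𝕜 fun v => a v ψ) (hE : IsExactSolution M a γ f ℓ E) (hδ : 0 < δ) :
    η ^ 2 * ‖γ (p - E)‖ ^ 2 + ‖q‖ ^ 2 ≤ δ * ‖E‖ ^ 2 := by
  have hre : -RCLike.re (inner 𝕜 (p - E) E) ≤ ‖E‖ ^ 2 := calc
    -RCLike.re (inner 𝕜 (p - E) E)
      ≤ ‖inner 𝕜 (p - E) E‖ := (neg_le_abs _).trans (RCLike.abs_re_le_norm _)
    _ ≤ ‖p - E‖ * ‖E‖ := norm_inner_le_norm _ _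
    _ ≤ ‖E‖ * ‖E‖ := by gcongr; exact h.norm_sub_le ha hE hδ
    _ = ‖E‖ ^ 2 := (sq _).symm
  calc η ^ 2 * ‖γ (p - E)‖ ^ 2 + ‖q‖ ^ 2
      = δ * (-‖p - E‖ ^ 2 + -RCLike.re (inner 𝕜 (p - E) E)) := by
        linarith [h.energy_identity_s9 ha hE]
    _ ≤ δ * (0 + ‖E‖ ^ 2) := by gcongr; exact neg_nonpos.2 (sq_nonneg _)
    _ = δ * ‖E‖ ^ 2 := by rw [zero_add]

theorem norm_snd_le (h : IsRelaxedQRSolution_s9 M a γ f ℓ δ η p q)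
    (ha : ∀ ψ ∈ M, IsLinearMap 𝕜 fun v => a v ψ) (hE : IsExactSolution M a γ f ℓ E) (hδ : 0 < δ) :
    ‖q‖ ≤ √δ * ‖E‖ := by
  refine (sq_le_sq₀ (by positivity) (by positivity)).1 ?_
  rw [mul_pow, Real.sq_sqrt hδ.le]
  exact (le_add_of_nonneg_left (by positivity)).trans (h.trace_sq_add_snd_sq_le ha hE hδ)

theorem abs_mul_norm_trace_sub_le (h : IsRelaxedQRSolution_s9 M a γ f ℓ δ η p q)
    (ha : ∀ ψ ∈ M, IsLinearMap 𝕜 fun v => a v ψ) (hE : IsExactSolution M a γ f ℓ E) (hδ : 0 < δ) :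
    |η| * ‖γ (p - E)‖ ≤ √δ * ‖E‖ := by
  refine (sq_le_sq₀ (by positivity) (by positivity)).1 ?_
  rw [mul_pow, mul_pow, sq_abs, Real.sq_sqrt hδ.le]
  exact (le_add_of_nonneg_right (sq_nonneg ‖q‖)).trans (h.trace_sq_add_snd_sq_le ha hE hδ)

variable {ι : Type*} {l : Filter ι} {δ : ι → ℝ} {p q : ι → V}

theorem tendsto_snd (h : ∀ i, IsRelaxedQRSolution_s9 M a γ f ℓ (δ i) η (p i) (q i))
    (ha : ∀ ψ ∈ M, IsLinearMap 𝕜 fun v => a v ψ) (hE : IsExactSolution M a γ f ℓ E)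
    (hδ_pos : ∀ i, 0 < δ i) (hδ : Tendsto δ l (𝓝 0)) : Tendsto q l (𝓝 0) := by
  refine squeeze_zero_norm (fun i => (h i).norm_snd_le ha hE (hδ_pos i)) ?_
  simpa using hδ.sqrt.mul_const ‖E‖

theorem tendsto_trace_sub (h : ∀ i, IsRelaxedQRSolution_s9 M a γ f ℓ (δ i) η (p i) (q i))
    (ha : ∀ ψ ∈ M, IsLinearMap 𝕜 fun v => a v ψ) (hE : IsExactSolution M a γ f ℓ E)
    (hη : η ≠ 0) (hδ_pos : ∀ i, 0 < δ i) (hδ : Tendsto δ l (𝓝 0)) :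
    Tendsto (fun i => γ (p i - E)) l (𝓝 0) := by
  refine squeeze_zero_norm
    (fun i => (le_div_iff₀' (abs_pos.2 hη)).2
      ((h i).abs_mul_norm_trace_sub_le ha hE (hδ_pos i))) ?_
  simpa using (hδ.sqrt.mul_const ‖E‖).div_const |η|

theorem tendsto_inner_sub [CompleteSpace V]
    (h : ∀ i, IsRelaxedQRSolution_s9 M a γ f ℓ (δ i) η (p i) (q i))
    (ha : ∀ ψ ∈ M, IsBoundedLinearMap 𝕜 fun v => a v ψ) (hE : IsExactSolution M a γ f ℓ E)
    (hE_unique : ∀ E' : V, IsExactSolution M a γ f ℓ E' → E' = E)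
    (hη : η ≠ 0) (hδ_pos : ∀ i, 0 < δ i) (hδ : Tendsto δ l (𝓝 0)) (w : V) :
    Tendsto (fun i => inner 𝕜 w (p i - E)) l (𝓝 0) := by
  have ha_lin : ∀ ψ ∈ M, IsLinearMap 𝕜 fun v => a v ψ := fun ψ hψ => (ha ψ hψ).toIsLinearMap
  suffices weaklyNullTests 𝕜 (fun i => p i - E) l = ⊤ from
    mem_weaklyNullTests.1 (this ▸ Submodule.mem_top)
  refine weaklyNullTests_eq_top
    (fun i => (h i).norm_sub_le ha_lin hE (hδ_pos i)) fun u hu => ?_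
  have hγu : γ u = 0 := by
    refine inner_self_eq_zero (𝕜 := 𝕜).1 (hu ((innerSL 𝕜 (γ u)).comp γ) ?_)
    simpa using (tendsto_const_nhds (x := γ u)).inner (𝕜 := 𝕜)
      (tendsto_trace_sub h ha_lin hE hη hδ_pos hδ)
  have hau : ∀ ψ ∈ M, a u ψ = 0 := fun ψ hψ => by
    refine hu (ha ψ hψ).toContinuousLinearMap ?_
    change Tendsto (fun i => a (p i - E) ψ) l (𝓝 0)
    simpa [(h _).apply_sub_eq_inner_s9 ha_lin hE hψ] using
      (tendsto_const_nhds (x := ψ)).inner (𝕜 := 𝕜)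
        (tendsto_snd h ha_lin hE hδ_pos hδ)
  have hadd : E + u = E := hE_unique (E + u)
    { trace_eq := by rw [map_add, hE.trace_eq, hγu, add_zero]
      apply_eq := fun ψ hψ => by
        rw [(ha_lin ψ hψ).map_add E u, hE.apply_eq ψ hψ, hau ψ hψ, add_zero] }
  exact add_eq_left.1 hadd

theorem tendsto_fst [CompleteSpace V]
    (h : ∀ i, IsRelaxedQRSolution_s9 M a γ f ℓ (δ i) η (p i) (q i))
    (ha : ∀ ψ ∈ M, IsBoundedLinearMap 𝕜 fun v => a v ψ) (hE : IsExactSolution M a γ f ℓ E)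
    (hE_unique : ∀ E' : V, IsExactSolution M a γ f ℓ E' → E' = E)
    (hη : η ≠ 0) (hδ_pos : ∀ i, 0 < δ i) (hδ : Tendsto δ l (𝓝 0)) :
    Tendsto p l (𝓝 E) := by
  refine tendsto_sub_nhds_zero_iff.1 (squeeze_zero_norm (fun i => Real.le_sqrt_of_sq_le <|
    (h i).norm_sub_sq_le_norm_inner (fun ψ hψ => (ha ψ hψ).toIsLinearMap) hE (hδ_pos i)) ?_)
  simpa [norm_inner_symm] using
    (tendsto_inner_sub h ha hE hE_unique hη hδ_pos hδ E).norm.sqrt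

end IsRelaxedQRSolution_s9

theorem relaxed_qr_convergence_general [CompleteSpace V] {ι : Type*} {l : Filter ι}
    {δ : ι → ℝ} {p q : ι → V}
    (h : ∀ i, IsRelaxedQRSolution_s9 M a γ f ℓ (δ i) η (p i) (q i))
    (ha : ∀ ψ ∈ M, IsBoundedLinearMap 𝕜 fun v => a v ψ) (hE : IsExactSolution M a γ f ℓ E)
    (hE_unique : ∀ E' : V, IsExactSolution M a γ f ℓ E' → E' = E)
    (hη : η ≠ 0) (hδ_pos : ∀ i, 0 < δ i) (hδ : Tendsto δ l (𝓝 0)) :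
    Tendsto p l (𝓝 E) ∧ Tendsto q l (𝓝 0) :=
  ⟨IsRelaxedQRSolution_s9.tendsto_fst h ha hE hE_unique hη hδ_pos hδ,
    IsRelaxedQRSolution_s9.tendsto_snd h (fun ψ hψ => (ha ψ hψ).toIsLinearMap) hE hδ_pos hδ⟩

end RelaxedQR

/-- convergence of the relaxed QR method. If `E` is the unique element of
`V` with `γE = f` and `a(E,ψ) = ℓ(ψ)` for all `ψ ∈ M`, `η > 0` is fixed, and
`(E_{(δ,η)}, F_{(δ,η)})` solves the relaxed QR problem for each `δ > 0`, then
`E_{(δₙ,η)} → E` and `F_{(δₙ,η)} → 0` in `V` for any positive sequence `δₙ → 0`. -/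
theorem relaxed_qr_convergence
    {V L : Type*} [NormedAddCommGroup V] [InnerProductSpace ℂ V] [CompleteSpace V]
    [NormedAddCommGroup L] [InnerProductSpace ℂ L] [CompleteSpace L]
    (M : Submodule ℂ V) (hM : IsClosed (M : Set V))
    (a : V → V → ℂ)
    (ha_lin : ∀ (c : ℂ) (u u' v : V), v ∈ M → a (c • u + u') v = c * a u v + a u' v)
    (ha_conj : ∀ (c : ℂ) (u v v' : V), v ∈ M → v' ∈ M →
      a u (c • v + v') = conj c * a u v + a u v')
    (ha_bdd : ∃ C : ℝ, ∀ (u v : V), v ∈ M → ‖a u v‖ ≤ C * ‖u‖ * ‖v‖)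
    (γ : V →L[ℂ] L) (f : L)
    (ℓ : V → ℂ)
    (hℓ_conj : ∀ (c : ℂ) (v w : V), v ∈ M → w ∈ M → ℓ (c • v + w) = conj c * ℓ v + ℓ w)
    (hℓ_bdd : ∃ C : ℝ, ∀ v ∈ M, ‖ℓ v‖ ≤ C * ‖v‖)
    (E : V) (hE_trace : γ E = f) (hE_eq : ∀ ψ ∈ M, a E ψ = ℓ ψ)
    (hE_unique : ∀ E' : V, γ E' = f → (∀ ψ ∈ M, a E' ψ = ℓ ψ) → E' = E)
    (η : ℝ) (hη : 0 < η)
    (sol : ℝ → V × V)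
    (hsol : ∀ δ : ℝ, 0 < δ →
      (sol δ).2 ∈ M ∧
      (∀ φ : V, (δ : ℂ) * ⟪φ, (sol δ).1⟫ + (η : ℂ) ^ 2 * ⟪γ φ, γ (sol δ).1 - f⟫ +
        conj (a φ (sol δ).2) = 0) ∧
      (∀ ψ ∈ M, a (sol δ).1 ψ - ⟪ψ, (sol δ).2⟫ = ℓ ψ))
    (δn : ℕ → ℝ) (hδn_pos : ∀ n, 0 < δn n)
    (hδn_lim : Tendsto δn atTop (𝓝 0)) :
    Tendsto (fun n => (sol (δn n)).1) atTop (𝓝 E) ∧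
    Tendsto (fun n => (sol (δn n)).2) atTop (𝓝 (0 : V)) := by
  obtain ⟨C, hC⟩ := ha_bdd
  exact relaxed_qr_convergence_general (M := M) (a := a)
    (fun n => have ⟨hmem, hvar, hcon⟩ := hsol (δn n) (hδn_pos n); ⟨hmem, hvar, hcon⟩)
    (fun ψ hψ => isBoundedLinearMap_of_map_smul_add (fun c u v => ha_lin c u v ψ hψ)
      fun v => (hC v ψ hψ).trans_eq (mul_right_comm C ‖v‖ ‖ψ‖))
    ⟨hE_trace, hE_eq⟩ (fun E' hE' => hE_unique E' hE'.trace_eq hE'.apply_eq) hη.ne' hδn_pos hδn_lim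
end

section
/- For every δ > 0, ν > 0 and η > 0, the RR-QR problem admits exactly one solution: there exists a unique pair (E_β, F_β) ∈ W × M such that δ p(E_β, φ) + ν⟨γ₁E_β, γ₁φ⟩_{L₁} + η²⟨γ₀E_β − f, γ₀φ⟩_{L₀} + conj(a(φ, F_β)) = 0 for all φ ∈ W and a(E_β, ψ) − ⟨F_β, ψ⟩_W = ℓ(ψ) for all ψ ∈ M. Moreover, the associated block form is coercive with constant min(δ, ν, 1): for all u ∈ W, v ∈ M, Re(δ p(u,u) + ν‖γ₁u‖_{L₁}² + η²‖γ₀u‖_{L₀}² + ‖v‖_W²) ≥ min(δ,ν,1)(‖u‖_W² + ‖v‖_W²) − η²·0, i.e. δ p(u,u) + ν‖γ₁u‖_{L₁}² + ‖v‖_W² ≥ min(δ,ν,1)(‖u‖_W² + ‖v‖_W²). (Abstract form of the well-posedness part of Theorem 4.2.) -/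
open ComplexConjugate

local notation "⟪" x ", " y "⟫" => @inner ℂ _ _ x y

/-!
The second equation reads `F = A' E - l`, where `A'` and `l` are the Riesz representatives of `a`
and `ℓ`. Substituting it into the first leaves one equation for `E`, with the form
`δ p + ν ⟨γ₁ ·, γ₁ ·⟩ + η² ⟨γ₀ ·, γ₀ ·⟩ + ⟨A' ·, A' ·⟩`. The first two terms alone dominate
`min δ ν ‖·‖²`, because `‖u‖² = p u u + ‖γ₁ u‖²`, and the other two are nonnegative, so
Lax–Milgram applies.
-/

section SesquilinearForms

open InnerProductSpace

variable {𝕜 V Q : Type*} [RCLike 𝕜]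

section Bundling

variable [SeminormedAddCommGroup V] [NormedSpace 𝕜 V]
  [SeminormedAddCommGroup Q] [NormedSpace 𝕜 Q]

theorem exists_continuousLinearMap_of_conjLinear_of_bounded {g : Q → 𝕜}
    (hg_conj : ∀ (c : 𝕜) (v w : Q), g (c • v + w) = conj c * g v + g w)
    (hg_bdd : ∃ C : ℝ, ∀ v, ‖g v‖ ≤ C * ‖v‖) :
    ∃ G : Q →L⋆[𝕜] 𝕜, ∀ v, G v = g v := by
  have g_zero : g 0 = 0 := by simpa using hg_conj 1 0 0
  let G₀ : Q →ₗ⋆[𝕜] 𝕜 :=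
    { toFun := g
      map_add' := fun v w ↦ by simpa using hg_conj 1 v w
      map_smul' := fun c v ↦ by simpa [g_zero] using hg_conj c v 0 }
  exact ⟨G₀.mkContinuousOfExistsBound hg_bdd, fun _ ↦ rfl⟩

theorem exists_continuousLinearMap₂_of_sesquilinear_of_bounded {b : V → Q → 𝕜}
    (hb_lin : ∀ (c : 𝕜) (u u' : V) (v : Q), b (c • u + u') v = c * b u v + b u' v)
    (hb_conj : ∀ (c : 𝕜) (u : V) (v v' : Q), b u (c • v + v') = conj c * b u v + b u v')
    (hb_bdd : ∃ C : ℝ, ∀ u v, ‖b u v‖ ≤ C * ‖u‖ * ‖v‖) :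
    ∃ B : Q →L⋆[𝕜] V →L[𝕜] 𝕜, ∀ v u, B v u = b u v := by
  obtain ⟨C, hC⟩ := hb_bdd
  have b_zero_left (v : Q) : b 0 v = 0 := by simpa using hb_lin 1 0 0 v
  have b_zero_right (u : V) : b u 0 = 0 := by simpa using hb_conj 1 u 0 0
  let B₀ : Q →ₗ⋆[𝕜] V →ₗ[𝕜] 𝕜 :=
    LinearMap.mk₂'ₛₗ (starRingEnd 𝕜) (RingHom.id 𝕜) (fun v u ↦ b u v)
      (fun v v' u ↦ by simpa using hb_conj 1 u v v')
      (fun c v u ↦ by simpa [b_zero_right] using hb_conj c u v 0)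
      (fun v u u' ↦ by simpa using hb_lin 1 u u' v)
      (fun c v u ↦ by simpa [b_zero_left] using hb_lin c u 0 v)
  exact ⟨B₀.mkContinuous₂ C fun v u ↦ (hC u v).trans_eq (mul_right_comm C ‖u‖ ‖v‖),
    fun _ _ ↦ rfl⟩

end Bundling

variable [NormedAddCommGroup V] [InnerProductSpace 𝕜 V] [CompleteSpace V]
  [NormedAddCommGroup Q] [InnerProductSpace 𝕜 Q] [CompleteSpace Q]

theorem exists_forall_inner_eq (g : V →L⋆[𝕜] 𝕜) : ∃ r : V, ∀ φ, inner 𝕜 φ r = g φ := by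
  let conjG : V →L[𝕜] 𝕜 := (starL 𝕜 : 𝕜 ≃L⋆[𝕜] 𝕜).toContinuousLinearMap.comp g
  refine ⟨(toDual 𝕜 V).symm conjG, fun φ ↦ ?_⟩
  rw [← inner_conj_symm, toDual_symm_apply]
  simp [conjG]

theorem exists_continuousLinearMap_forall_inner_eq (B : Q →L⋆[𝕜] V →L[𝕜] 𝕜) :
    ∃ T : V →L[𝕜] Q, ∀ v u, inner 𝕜 v (T u) = B v u := by
  let S : Q →L[𝕜] V := (toDual 𝕜 V).symm.toContinuousLinearEquiv.toContinuousLinearMap.comp B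
  refine ⟨S.adjoint, fun v u ↦ ?_⟩
  rw [ContinuousLinearMap.adjoint_inner_right]
  exact toDual_symm_apply

/- The Lax–Milgram theorem; Mathlib's version, for `IsCoercive`, covers real bilinear forms only. -/
theorem existsUnique_forall_eq_of_coercive (B : V →L⋆[𝕜] V →L[𝕜] 𝕜) {c : ℝ} (hc : 0 < c)
    (hB : ∀ u, c * ‖u‖ ^ 2 ≤ RCLike.re (B u u)) (g : V →L⋆[𝕜] 𝕜) :
    ∃! u : V, ∀ φ, B φ u = g φ := by
  obtain ⟨T, hT⟩ := exists_continuousLinearMap_forall_inner_eq B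
  obtain ⟨r, hr⟩ := exists_forall_inner_eq g
  have T_isUnit : IsUnit T := by
    refine T.isUnit_of_forall_le_norm_inner_map (c := ⟨c, hc.le⟩) hc fun u ↦ ?_
    calc ‖u‖ ^ 2 * c ≤ RCLike.re (B u u) := (mul_comm _ _).trans_le (hB u)
      _ ≤ ‖B u u‖ := RCLike.re_le_norm _
      _ = ‖inner 𝕜 (T u) u‖ := by rw [← hT, norm_inner_symm]
  have weak_iff (u : V) : (∀ φ, B φ u = g φ) ↔ T u = r := by
    simp only [← hT, ← hr]
    exact ⟨ext_inner_left 𝕜, fun h φ ↦ by rw [h]⟩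
  simpa only [weak_iff] using
    (ContinuousLinearMap.isUnit_iff_bijective.mp T_isUnit).existsUnique r

theorem existsUnique_regularized_saddlePoint (s : V →L⋆[𝕜] V →L[𝕜] 𝕜) {c : ℝ} (hc : 0 < c)
    (hs : ∀ u, c * ‖u‖ ^ 2 ≤ RCLike.re (s u u)) (b : Q →L⋆[𝕜] V →L[𝕜] 𝕜)
    (g : V →L⋆[𝕜] 𝕜) (ℓ : Q →L⋆[𝕜] 𝕜) :
    ∃! q : V × Q, (∀ φ, s φ q.1 + conj (b q.2 φ) = g φ) ∧
      ∀ ψ, b ψ q.1 - inner 𝕜 ψ q.2 = ℓ ψ := by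
  obtain ⟨T, hT⟩ := exists_continuousLinearMap_forall_inner_eq b
  obtain ⟨l, hl⟩ := exists_forall_inner_eq ℓ
  have multiplier_iff (u : V) (v : Q) :
      (∀ ψ, b ψ u - inner 𝕜 ψ v = ℓ ψ) ↔ v = T u - l := by
    simp only [← hT, ← hl, ← inner_sub_right]
    exact ⟨fun h ↦ by rw [← ext_inner_left 𝕜 h, sub_sub_cancel],
      fun h ψ ↦ by rw [h, sub_sub_cancel]⟩
  let sT : V →L⋆[𝕜] V →L[𝕜] 𝕜 := s + (innerSL 𝕜).bilinearComp T T
  have sT_coercive (u : V) : c * ‖u‖ ^ 2 ≤ RCLike.re (sT u u) := by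
    have : 0 ≤ RCLike.re (inner 𝕜 (T u) (T u)) := inner_self_nonneg
    simpa [sT] using (hs u).trans (le_add_of_nonneg_right this)
  have reduced_iff (u : V) : (∀ φ, s φ u + conj (b (T u - l) φ) = g φ) ↔
      ∀ φ, sT φ u = (g + (innerSLFlip 𝕜 l).comp T) φ := by
    refine forall_congr' fun φ ↦ ?_
    simp only [sT, ← hT, inner_conj_symm, inner_sub_right, add_apply,
      ContinuousLinearMap.bilinearComp_apply, innerSL_apply_apply,
      ContinuousLinearMap.comp_apply, innerSLFlip_apply_apply, ← add_sub_assoc, sub_eq_iff_eq_add]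
  obtain ⟨u, hu, u_unique⟩ := existsUnique_forall_eq_of_coercive sT hc sT_coercive
    (g + (innerSLFlip 𝕜 l).comp T)
  refine ⟨(u, T u - l), ⟨(reduced_iff u).2 hu, (multiplier_iff u _).2 rfl⟩, ?_⟩
  rintro ⟨u', v'⟩ ⟨hprimal, hdual⟩
  obtain rfl : v' = T u' - l := (multiplier_iff u' v').1 hdual
  rw [u_unique u' ((reduced_iff u').1 hprimal)]

end SesquilinearForms

section RRQR

variable {𝕜 W L₀ L₁ : Type*} [RCLike 𝕜] [SeminormedAddCommGroup W] [InnerProductSpace 𝕜 W]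
  [SeminormedAddCommGroup L₀] [InnerProductSpace 𝕜 L₀]
  [SeminormedAddCommGroup L₁] [InnerProductSpace 𝕜 L₁]
  (γ₀ : W →L[𝕜] L₀) (γ₁ : W →L[𝕜] L₁) {p : W → W → 𝕜} {δ ν : ℝ} (η : ℝ)

variable (δ ν) in
/-- The form `δ p + ν ⟨γ₁ ·, γ₁ ·⟩ + η² ⟨γ₀ ·, γ₀ ·⟩` of the RR-QR problem. The form `p` is
encoded as `⟨·, ·⟩ - ⟨γ₁ ·, γ₁ ·⟩`, and the test function comes first, following the convention
for `inner`. -/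
noncomputable def rrqrForm : W →L⋆[𝕜] W →L[𝕜] 𝕜 :=
  (δ : 𝕜) • (innerSL 𝕜 - (innerSL 𝕜).bilinearComp γ₁ γ₁) +
    (ν : 𝕜) • (innerSL 𝕜).bilinearComp γ₁ γ₁ + (η : 𝕜) ^ 2 • (innerSL 𝕜).bilinearComp γ₀ γ₀

theorem rrqrForm_apply (hp : ∀ u v : W, inner 𝕜 v u = p u v + inner 𝕜 (γ₁ v) (γ₁ u))
    (φ u : W) :
    rrqrForm γ₀ γ₁ δ ν η φ u = (δ : 𝕜) * p u φ + (ν : 𝕜) * inner 𝕜 (γ₁ φ) (γ₁ u) +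
      (η : 𝕜) ^ 2 * inner 𝕜 (γ₀ φ) (γ₀ u) := by
  simp [rrqrForm, hp u φ]

/-- The data functional `η² ⟨f, γ₀ ·⟩` of the RR-QR problem, with the argument of the functional
in the conjugate-linear slot. -/
noncomputable def rrqrData (f : L₀) : W →L⋆[𝕜] 𝕜 :=
  (η : 𝕜) ^ 2 • (innerSLFlip 𝕜 f).comp γ₀

theorem rrqrForm_add_eq_rrqrData_iff
    (hp : ∀ u v : W, inner 𝕜 v u = p u v + inner 𝕜 (γ₁ v) (γ₁ u)) (f : L₀) (φ u : W) (z : 𝕜) :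
    rrqrForm γ₀ γ₁ δ ν η φ u + z = rrqrData γ₀ η f φ ↔
      (δ : 𝕜) * p u φ + (ν : 𝕜) * inner 𝕜 (γ₁ φ) (γ₁ u) +
        (η : 𝕜) ^ 2 * inner 𝕜 (γ₀ φ) (γ₀ u - f) + z = 0 := by
  have data_apply : rrqrData γ₀ η f φ = (η : 𝕜) ^ 2 * inner 𝕜 (γ₀ φ) f := rfl
  rw [← sub_eq_zero, rrqrForm_apply γ₀ γ₁ η hp, data_apply, inner_sub_right]
  ring_nf

variable {γ₁}

theorem norm_sq_eq_re_add_norm_sq (hp : ∀ u v : W, inner 𝕜 v u = p u v + inner 𝕜 (γ₁ v) (γ₁ u))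
    (u : W) : ‖u‖ ^ 2 = RCLike.re (p u u) + ‖γ₁ u‖ ^ 2 := by
  rw [@norm_sq_eq_re_inner 𝕜, @norm_sq_eq_re_inner 𝕜, hp, map_add]

theorem min_mul_norm_sq_le (hp_pos : ∀ u : W, 0 ≤ RCLike.re (p u u))
    (hp : ∀ u v : W, inner 𝕜 v u = p u v + inner 𝕜 (γ₁ v) (γ₁ u)) (u : W) :
    min δ ν * ‖u‖ ^ 2 ≤ δ * RCLike.re (p u u) + ν * ‖γ₁ u‖ ^ 2 := by
  rw [norm_sq_eq_re_add_norm_sq hp u, mul_add]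
  gcongr
  · exact hp_pos u
  · exact min_le_left δ ν
  · exact min_le_right δ ν

theorem min_mul_norm_sq_le_re_rrqrForm (hp_pos : ∀ u : W, 0 ≤ RCLike.re (p u u))
    (hp : ∀ u v : W, inner 𝕜 v u = p u v + inner 𝕜 (γ₁ v) (γ₁ u)) (u : W) :
    min δ ν * ‖u‖ ^ 2 ≤ RCLike.re (rrqrForm γ₀ γ₁ δ ν η u u) := by
  have re_eq : RCLike.re (rrqrForm γ₀ γ₁ δ ν η u u) =
      δ * RCLike.re (p u u) + ν * ‖γ₁ u‖ ^ 2 + η ^ 2 * ‖γ₀ u‖ ^ 2 := by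
    rw [rrqrForm_apply γ₀ γ₁ η hp, ← RCLike.ofReal_pow]
    simp only [map_add, RCLike.re_ofReal_mul, ← norm_sq_eq_re_inner]
  rw [re_eq]
  exact (min_mul_norm_sq_le hp_pos hp u).trans (le_add_of_nonneg_right (by positivity))

theorem min_mul_norm_sq_add_norm_sq_le (hp_pos : ∀ u : W, 0 ≤ RCLike.re (p u u))
    (hp : ∀ u v : W, inner 𝕜 v u = p u v + inner 𝕜 (γ₁ v) (γ₁ u)) (u v : W) :
    min δ (min ν 1) * (‖u‖ ^ 2 + ‖v‖ ^ 2) ≤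
      δ * RCLike.re (p u u) + ν * ‖γ₁ u‖ ^ 2 + ‖v‖ ^ 2 := by
  rw [← min_assoc, mul_add]
  gcongr ?_ + ?_
  · calc min (min δ ν) 1 * ‖u‖ ^ 2 ≤ min δ ν * ‖u‖ ^ 2 :=
          mul_le_mul_of_nonneg_right (min_le_left _ _) (sq_nonneg _)
      _ ≤ δ * RCLike.re (p u u) + ν * ‖γ₁ u‖ ^ 2 := min_mul_norm_sq_le hp_pos hp u
  · exact mul_le_of_le_one_left (sq_nonneg _) (min_le_right _ _)

end RRQR

theorem rrqr_wellposed_and_coercive_general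
    {𝕜 W L₀ L₁ : Type*} [RCLike 𝕜] [NormedAddCommGroup W] [InnerProductSpace 𝕜 W]
    [CompleteSpace W] [SeminormedAddCommGroup L₀] [InnerProductSpace 𝕜 L₀]
    [SeminormedAddCommGroup L₁] [InnerProductSpace 𝕜 L₁]
    (γ₀ : W →L[𝕜] L₀) (γ₁ : W →L[𝕜] L₁) (p : W → W → 𝕜)
    (hp_pos : ∀ u : W, 0 ≤ RCLike.re (p u u))
    (hp_compat : ∀ u v : W, inner 𝕜 v u = p u v + inner 𝕜 (γ₁ v) (γ₁ u))
    (M : Submodule 𝕜 W) (hM : IsClosed (M : Set W)) (a : W → W → 𝕜)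
    (ha_lin : ∀ (c : 𝕜) (u u' v : W), v ∈ M → a (c • u + u') v = c * a u v + a u' v)
    (ha_conj : ∀ (c : 𝕜) (u v v' : W), v ∈ M → v' ∈ M →
      a u (c • v + v') = conj c * a u v + a u v')
    (ha_bdd : ∃ C : ℝ, ∀ (u v : W), v ∈ M → ‖a u v‖ ≤ C * ‖u‖ * ‖v‖)
    (f : L₀) (ℓ : W → 𝕜)
    (hℓ_conj : ∀ (c : 𝕜) (v w : W), v ∈ M → w ∈ M → ℓ (c • v + w) = conj c * ℓ v + ℓ w)
    (hℓ_bdd : ∃ C : ℝ, ∀ v ∈ M, ‖ℓ v‖ ≤ C * ‖v‖)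
    (δ ν η : ℝ) (hδ : 0 < δ) (hν : 0 < ν) :
    (∃! q : W × W, q.2 ∈ M ∧
      (∀ φ : W, (δ : 𝕜) * p q.1 φ + (ν : 𝕜) * inner 𝕜 (γ₁ φ) (γ₁ q.1) +
        (η : 𝕜) ^ 2 * inner 𝕜 (γ₀ φ) (γ₀ q.1 - f) + conj (a φ q.2) = 0) ∧
      (∀ ψ ∈ M, a q.1 ψ - inner 𝕜 ψ q.2 = ℓ ψ)) ∧
    (∀ u v : W, min δ (min ν 1) * (‖u‖ ^ 2 + ‖v‖ ^ 2) ≤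
      δ * RCLike.re (p u u) + ν * ‖γ₁ u‖ ^ 2 + ‖v‖ ^ 2) := by
  refine ⟨?_, min_mul_norm_sq_add_norm_sq_le hp_pos hp_compat⟩
  have : CompleteSpace M := hM.completeSpace_coe
  obtain ⟨b, hb⟩ := exists_continuousLinearMap₂_of_sesquilinear_of_bounded
    (b := fun (u : W) (v : M) ↦ a u v) (fun c u u' v ↦ ha_lin c u u' v v.2)
    (fun c u v v' ↦ ha_conj c u v v' v.2 v'.2) (ha_bdd.imp fun C hC u v ↦ hC u v v.2)
  obtain ⟨l, hl⟩ := exists_continuousLinearMap_of_conjLinear_of_bounded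
    (g := fun v : M ↦ ℓ v) (fun c v w ↦ hℓ_conj c v w v.2 w.2) (hℓ_bdd.imp fun C hC v ↦ hC v v.2)
  have primal_iff (u : W) (v : M) :
      (∀ φ, rrqrForm γ₀ γ₁ δ ν η φ u + conj (b v φ) = rrqrData γ₀ η f φ) ↔
      ∀ φ, (δ : 𝕜) * p u φ + (ν : 𝕜) * inner 𝕜 (γ₁ φ) (γ₁ u) +
        (η : 𝕜) ^ 2 * inner 𝕜 (γ₀ φ) (γ₀ u - f) + conj (a φ v) = 0 := by
    simp only [rrqrForm_add_eq_rrqrData_iff γ₀ γ₁ η hp_compat, hb]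
  have dual_iff (u : W) (v : M) :
      (∀ ψ, b ψ u - inner 𝕜 ψ v = l ψ) ↔ ∀ ψ ∈ M, a u ψ - inner 𝕜 ψ (v : W) = ℓ ψ := by
    simp only [hb, hl, Submodule.coe_inner, Subtype.forall]
  obtain ⟨⟨E, F⟩, ⟨hE, hF⟩, unique⟩ := existsUnique_regularized_saddlePoint
    (rrqrForm γ₀ γ₁ δ ν η) (lt_min hδ hν)
    (min_mul_norm_sq_le_re_rrqrForm γ₀ η hp_pos hp_compat) b (rrqrData γ₀ η f) l
  refine ⟨(E, F), ⟨F.2, (primal_iff E F).1 hE, (dual_iff E F).1 hF⟩, ?_⟩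
  rintro ⟨u, v⟩ ⟨hv, hu_primal, hu_dual⟩
  have := unique (u, ⟨v, hv⟩) ⟨(primal_iff _ _).2 hu_primal, (dual_iff _ _).2 hu_dual⟩
  simpa [Prod.ext_iff, Subtype.ext_iff] using this

/-- for every `δ, ν, η > 0`, the RR-QR problem admits exactly one solution
`(E_β, F_β) ∈ W × M`; moreover the associated block form is coercive with constant
`min(δ, ν, 1)`: `δ p(u,u) + ν‖γ₁u‖² + ‖v‖² ≥ min(δ,ν,1)(‖u‖² + ‖v‖²)` for all `u ∈ W`,
`v ∈ M`. (Paper inner products `⟨u,φ⟩` are linear in the first argument, hence `⟪φ, u⟫`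
in Mathlib's convention; `p(u,u)` is real, and we use its real part.) -/
theorem rrqr_wellposed_and_coercive
    {W L₀ L₁ : Type*} [NormedAddCommGroup W] [InnerProductSpace ℂ W] [CompleteSpace W]
    [NormedAddCommGroup L₀] [InnerProductSpace ℂ L₀] [CompleteSpace L₀]
    [NormedAddCommGroup L₁] [InnerProductSpace ℂ L₁] [CompleteSpace L₁]
    (γ₀ : W →L[ℂ] L₀) (γ₁ : W →L[ℂ] L₁)
    (p : W → W → ℂ)
    (hp_lin : ∀ (c : ℂ) (u u' v : W), p (c • u + u') v = c * p u v + p u' v)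
    (hp_herm : ∀ u v : W, p v u = conj (p u v))
    (hp_pos : ∀ u : W, 0 ≤ (p u u).re)
    (hp_bdd : ∃ C : ℝ, ∀ u v : W, ‖p u v‖ ≤ C * ‖u‖ * ‖v‖)
    (hp_compat : ∀ u v : W, (⟪v, u⟫ : ℂ) = p u v + ⟪γ₁ v, γ₁ u⟫)
    (M : Submodule ℂ W) (hM : IsClosed (M : Set W))
    (a : W → W → ℂ)
    (ha_lin : ∀ (c : ℂ) (u u' v : W), v ∈ M → a (c • u + u') v = c * a u v + a u' v)
    (ha_conj : ∀ (c : ℂ) (u v v' : W), v ∈ M → v' ∈ M →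
      a u (c • v + v') = conj c * a u v + a u v')
    (ha_bdd : ∃ C : ℝ, ∀ (u v : W), v ∈ M → ‖a u v‖ ≤ C * ‖u‖ * ‖v‖)
    (f : L₀)
    (ℓ : W → ℂ)
    (hℓ_conj : ∀ (c : ℂ) (v w : W), v ∈ M → w ∈ M → ℓ (c • v + w) = conj c * ℓ v + ℓ w)
    (hℓ_bdd : ∃ C : ℝ, ∀ v ∈ M, ‖ℓ v‖ ≤ C * ‖v‖)
    (δ ν η : ℝ) (hδ : 0 < δ) (hν : 0 < ν) (hη : 0 < η) :
    (∃! q : W × W, q.2 ∈ M ∧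
      (∀ φ : W, (δ : ℂ) * p q.1 φ + (ν : ℂ) * ⟪γ₁ φ, γ₁ q.1⟫ +
        (η : ℂ) ^ 2 * ⟪γ₀ φ, γ₀ q.1 - f⟫ + conj (a φ q.2) = 0) ∧
      (∀ ψ ∈ M, a q.1 ψ - ⟪ψ, q.2⟫ = ℓ ψ)) ∧
    (∀ (u v : W), v ∈ M →
      min δ (min ν 1) * (‖u‖ ^ 2 + ‖v‖ ^ 2) ≤
        δ * (p u u).re + ν * ‖γ₁ u‖ ^ 2 + ‖v‖ ^ 2) := by
  obtain ⟨hsol, hcoer⟩ := rrqr_wellposed_and_coercive_general γ₀ γ₁ p hp_pos hp_compat M hM a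
    ha_lin ha_conj ha_bdd f ℓ hℓ_conj hℓ_bdd δ ν η hδ hν
  exact ⟨hsol, fun u v _ ↦ hcoer u v⟩
end

section
/- Suppose there exists E ∈ W with γ₀E = f and a(E, ψ) = ℓ(ψ) for all ψ ∈ M. Let δ, ν, η > 0, set C(δ,ν) := max(δ,ν)/min(δ,ν), and let (E_β, F_β) ∈ W × M be a solution of the RR-QR problem. Then ‖F_β‖_W ≤ √(max(δ,ν) C(δ,ν)) · ‖E‖_W and ‖γ₀E_β − f‖_{L₀} ≤ (√(max(δ,ν) C(δ,ν)) / η) · ‖E‖_W. (Estimates (4.13) and (4.14) of Theorem 4.2.) -/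
open ComplexConjugate

local notation "⟪" x ", " y "⟫" => @inner ℂ _ _ x y

/-!
Test the first equation with `φ = E_β − E` and the second with `ψ = F_β`. Since `E` satisfies the
constraints exactly, the coupling term becomes `‖F_β‖²`, which gives the energy identity
`Re b(E_β, E_β − E) + η² ‖γ₀E_β − f‖² + ‖F_β‖² = 0` with `b = δ p + ν ⟨γ₁·, γ₁·⟩`. As `b` is a
semi-inner product, `4 Re b(u, u − E) = b(2u − E, 2u − E) − b(E, E) ≥ −max(δ, ν) ‖E‖²`, so both
squares are controlled by `max(δ, ν) ‖E‖² / 4`.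
-/

section RRQR

open RCLike

variable {𝕜 W L₀ L₁ M : Type*} [RCLike 𝕜]
  [SeminormedAddCommGroup L₀] [InnerProductSpace 𝕜 L₀]
  [SeminormedAddCommGroup L₁] [InnerProductSpace 𝕜 L₁]
  [SeminormedAddCommGroup M] [InnerProductSpace 𝕜 M]

section Module

variable [AddCommGroup W] [Module 𝕜 W]

/-- The regularizing form `b(u, v) = δ p(u, v) + ν ⟨γ₁u, γ₁v⟩` of the RR-QR problem. It is linear in
`u` as in the paper, so the arguments of Mathlib's `inner` are swapped. -/
def regularizingForm (p : W → W → 𝕜) (γ₁ : W →ₗ[𝕜] L₁) (δ ν : ℝ) (u v : W) : 𝕜 :=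
  (δ : 𝕜) * p u v + (ν : 𝕜) * inner 𝕜 (γ₁ v) (γ₁ u)

/-- `(u, F)` solves the RR-QR problem with parameters `(δ, ν, η)` and data `(f, ℓ)`. The multiplier
space `M` is an inner product space of its own, which need not be a subspace of `W`. -/
structure IsRRQRSolution (p : W → W → 𝕜) (γ₀ : W →ₗ[𝕜] L₀) (γ₁ : W →ₗ[𝕜] L₁)
    (a : W →+ M → 𝕜) (f : L₀) (ℓ : M → 𝕜) (δ ν η : ℝ) (u : W) (F : M) : Prop where
  stationarity : ∀ φ : W, regularizingForm p γ₁ δ ν u φ +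
    (η : 𝕜) ^ 2 * inner 𝕜 (γ₀ φ) (γ₀ u - f) + conj (a φ F) = 0
  constraint : ∀ ψ : M, a u ψ - inner 𝕜 ψ F = ℓ ψ

variable {p : W → W → 𝕜} {γ₀ : W →ₗ[𝕜] L₀} {γ₁ : W →ₗ[𝕜] L₁} {a : W →+ M → 𝕜} {f : L₀}
  {ℓ : M → 𝕜} {δ ν η : ℝ} {E u : W} {F : M}

theorem re_regularizingForm_self (u : W) :
    re (regularizingForm p γ₁ δ ν u u) = δ * re (p u u) + ν * ‖γ₁ u‖ ^ 2 := by
  rw [regularizingForm, map_add, re_ofReal_mul, re_ofReal_mul, norm_sq_eq_re_inner (𝕜 := 𝕜)]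

theorem re_regularizingForm_self_nonneg (hp_pos : ∀ u : W, 0 ≤ re (p u u))
    (hδ : 0 ≤ δ) (hν : 0 ≤ ν) (u : W) : 0 ≤ re (regularizingForm p γ₁ δ ν u u) := by
  rw [re_regularizingForm_self]
  have := hp_pos u
  positivity

namespace IsRRQRSolution

theorem apply_sub_eq_norm_sq (h : IsRRQRSolution p γ₀ γ₁ a f ℓ δ ν η u F) (hE_eq : a E = ℓ) :
    a (u - E) F = (‖F‖ : 𝕜) ^ 2 := by
  rw [map_sub, Pi.sub_apply, hE_eq, ← h.constraint F, sub_sub_cancel, inner_self_eq_norm_sq_to_K]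

theorem energy_identity (h : IsRRQRSolution p γ₀ γ₁ a f ℓ δ ν η u F)
    (hE_trace : γ₀ E = f) (hE_eq : a E = ℓ) :
    re (regularizingForm p γ₁ δ ν u (u - E)) + η ^ 2 * ‖γ₀ u - f‖ ^ 2 + ‖F‖ ^ 2 = 0 := by
  have htest := h.stationarity (u - E)
  rw [h.apply_sub_eq_norm_sq hE_eq, map_sub γ₀, hE_trace, inner_self_eq_norm_sq_to_K] at htest
  simpa only [← ofReal_pow, conj_ofReal, map_add, re_ofReal_mul, ofReal_re, map_zero] using
    congrArg re htest

end IsRRQRSolution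

end Module

section InnerProductSpace

variable [SeminormedAddCommGroup W] [InnerProductSpace 𝕜 W]

variable {p : W → W → 𝕜} {γ₀ : W →ₗ[𝕜] L₀} {γ₁ : W →ₗ[𝕜] L₁} {a : W →+ M → 𝕜} {f : L₀}
  {ℓ : M → 𝕜} {δ ν η : ℝ} {E u : W} {F : M}

theorem re_regularizingForm
    (hp_compat : ∀ u v : W, inner 𝕜 v u = p u v + inner 𝕜 (γ₁ v) (γ₁ u)) (u v : W) :
    re (regularizingForm p γ₁ δ ν u v) =
      δ * re (inner 𝕜 u v) + (ν - δ) * re (inner 𝕜 (γ₁ u) (γ₁ v)) := by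
  rw [regularizingForm, inner_re_symm u v, inner_re_symm (γ₁ u), hp_compat u v, map_add, map_add,
    re_ofReal_mul, re_ofReal_mul]
  ring

theorem re_regularizingForm_eq_sub_div_four
    (hp_compat : ∀ u v : W, inner 𝕜 v u = p u v + inner 𝕜 (γ₁ v) (γ₁ u)) (u v : W) :
    re (regularizingForm p γ₁ δ ν u v) =
      (re (regularizingForm p γ₁ δ ν (u + v) (u + v)) -
        re (regularizingForm p γ₁ δ ν (u - v) (u - v))) / 4 := by
  simp only [re_regularizingForm hp_compat, map_add γ₁, map_sub γ₁,
    re_inner_eq_norm_add_mul_self_sub_norm_sub_mul_self_div_four u v,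
    re_inner_eq_norm_add_mul_self_sub_norm_sub_mul_self_div_four (γ₁ u) (γ₁ v),
    inner_self_eq_norm_mul_norm]
  ring

theorem re_regularizingForm_self_le (hp_pos : ∀ u : W, 0 ≤ re (p u u))
    (hp_compat : ∀ u v : W, inner 𝕜 v u = p u v + inner 𝕜 (γ₁ v) (γ₁ u)) (u : W) :
    re (regularizingForm p γ₁ δ ν u u) ≤ max δ ν * ‖u‖ ^ 2 := by
  calc re (regularizingForm p γ₁ δ ν u u)
      = δ * re (p u u) + ν * ‖γ₁ u‖ ^ 2 := re_regularizingForm_self u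
    _ ≤ max δ ν * re (p u u) + max δ ν * ‖γ₁ u‖ ^ 2 := by
        gcongr
        exacts [hp_pos u, le_max_left δ ν, le_max_right δ ν]
    _ = max δ ν * ‖u‖ ^ 2 := by
        rw [norm_sq_eq_re_inner (𝕜 := 𝕜) u, hp_compat u u, map_add,
          norm_sq_eq_re_inner (𝕜 := 𝕜) (γ₁ u), mul_add]

theorem neg_max_mul_norm_sq_div_four_le_re_regularizingForm_sub
    (hp_pos : ∀ u : W, 0 ≤ re (p u u))
    (hp_compat : ∀ u v : W, inner 𝕜 v u = p u v + inner 𝕜 (γ₁ v) (γ₁ u))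
    (hδ : 0 ≤ δ) (hν : 0 ≤ ν) (u e : W) :
    -(max δ ν * ‖e‖ ^ 2 / 4) ≤ re (regularizingForm p γ₁ δ ν u (u - e)) := by
  have hpol := re_regularizingForm_eq_sub_div_four (δ := δ) (ν := ν) hp_compat u (u - e)
  rw [sub_sub_cancel] at hpol
  have hnonneg := re_regularizingForm_self_nonneg (γ₁ := γ₁) hp_pos hδ hν (u + (u - e))
  have hle := re_regularizingForm_self_le (δ := δ) (ν := ν) hp_pos hp_compat e
  linarith

theorem IsRRQRSolution.energy_estimate (h : IsRRQRSolution p γ₀ γ₁ a f ℓ δ ν η u F)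
    (hp_pos : ∀ u : W, 0 ≤ re (p u u))
    (hp_compat : ∀ u v : W, inner 𝕜 v u = p u v + inner 𝕜 (γ₁ v) (γ₁ u))
    (hE_trace : γ₀ E = f) (hE_eq : a E = ℓ) (hδ : 0 ≤ δ) (hν : 0 ≤ ν) :
    ‖F‖ ^ 2 + (η * ‖γ₀ u - f‖) ^ 2 ≤ (√(max δ ν) / 2 * ‖E‖) ^ 2 := by
  have hlower := neg_max_mul_norm_sq_div_four_le_re_regularizingForm_sub hp_pos hp_compat hδ hν u E
  calc ‖F‖ ^ 2 + (η * ‖γ₀ u - f‖) ^ 2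
      = -re (regularizingForm p γ₁ δ ν u (u - E)) := by
        linear_combination h.energy_identity hE_trace hE_eq
    _ ≤ max δ ν * ‖E‖ ^ 2 / 4 := neg_le.mp hlower
    _ = (√(max δ ν) / 2 * ‖E‖) ^ 2 := by
        rw [mul_pow, div_pow, Real.sq_sqrt (le_max_of_le_left hδ)]
        ring

theorem rrqr_estimates_general (hp_pos : ∀ u : W, 0 ≤ re (p u u))
    (hp_compat : ∀ u v : W, inner 𝕜 v u = p u v + inner 𝕜 (γ₁ v) (γ₁ u))
    (hE_trace : γ₀ E = f) (hE_eq : a E = ℓ) (hδ : 0 ≤ δ) (hν : 0 ≤ ν) (hη : 0 < η)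
    (h : IsRRQRSolution p γ₀ γ₁ a f ℓ δ ν η u F) :
    ‖F‖ ≤ √(max δ ν) / 2 * ‖E‖ ∧ ‖γ₀ u - f‖ ≤ √(max δ ν) / 2 / η * ‖E‖ := by
  have henergy := h.energy_estimate hp_pos hp_compat hE_trace hE_eq hδ hν
  have hbound : 0 ≤ √(max δ ν) / 2 * ‖E‖ := by positivity
  constructor
  · exact (sq_le_sq₀ (norm_nonneg F) hbound).mp (by linarith [sq_nonneg (η * ‖γ₀ u - f‖)])
  · rw [div_mul_eq_mul_div, le_div_iff₀' hη]
    exact (sq_le_sq₀ (by positivity) hbound).mp (by linarith [sq_nonneg ‖F‖])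

end InnerProductSpace

end RRQR

theorem sqrt_max_div_two_le_sqrt_max_mul_max_div_min {δ ν : ℝ} (hδ : 0 < δ) (hν : 0 < ν) :
    √(max δ ν) / 2 ≤ √(max δ ν * (max δ ν / min δ ν)) := by
  have hratio : 1 ≤ max δ ν / min δ ν := (one_le_div (lt_min hδ hν)).mpr min_le_max
  calc √(max δ ν) / 2 ≤ √(max δ ν) := half_le_self (Real.sqrt_nonneg _)
    _ ≤ √(max δ ν * (max δ ν / min δ ν)) :=
        Real.sqrt_le_sqrt (le_mul_of_one_le_right (le_max_of_le_left hδ.le) hratio)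

/-- estimates (4.13) and (4.14) of Theorem 4.2:
`‖F_β‖_W ≤ √(max(δ,ν)C(δ,ν)) ‖E‖_W` and
`‖γ₀E_β − f‖ ≤ (√(max(δ,ν)C(δ,ν))/η) ‖E‖_W`, where `C(δ,ν) = max(δ,ν)/min(δ,ν)`. -/
theorem rrqr_estimates
    {W L₀ L₁ : Type*} [NormedAddCommGroup W] [InnerProductSpace ℂ W] [CompleteSpace W]
    [NormedAddCommGroup L₀] [InnerProductSpace ℂ L₀] [CompleteSpace L₀]
    [NormedAddCommGroup L₁] [InnerProductSpace ℂ L₁] [CompleteSpace L₁]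
    (γ₀ : W →L[ℂ] L₀) (γ₁ : W →L[ℂ] L₁)
    (p : W → W → ℂ)
    (hp_lin : ∀ (c : ℂ) (u u' v : W), p (c • u + u') v = c * p u v + p u' v)
    (hp_herm : ∀ u v : W, p v u = conj (p u v))
    (hp_pos : ∀ u : W, 0 ≤ (p u u).re)
    (hp_bdd : ∃ C : ℝ, ∀ u v : W, ‖p u v‖ ≤ C * ‖u‖ * ‖v‖)
    (hp_compat : ∀ u v : W, (⟪v, u⟫ : ℂ) = p u v + ⟪γ₁ v, γ₁ u⟫)
    (M : Submodule ℂ W) (hM : IsClosed (M : Set W))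
    (a : W → W → ℂ)
    (ha_lin : ∀ (c : ℂ) (u u' v : W), v ∈ M → a (c • u + u') v = c * a u v + a u' v)
    (ha_conj : ∀ (c : ℂ) (u v v' : W), v ∈ M → v' ∈ M →
      a u (c • v + v') = conj c * a u v + a u v')
    (ha_bdd : ∃ C : ℝ, ∀ (u v : W), v ∈ M → ‖a u v‖ ≤ C * ‖u‖ * ‖v‖)
    (f : L₀)
    (ℓ : W → ℂ)
    (hℓ_conj : ∀ (c : ℂ) (v w : W), v ∈ M → w ∈ M → ℓ (c • v + w) = conj c * ℓ v + ℓ w)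
    (hℓ_bdd : ∃ C : ℝ, ∀ v ∈ M, ‖ℓ v‖ ≤ C * ‖v‖)
    (E : W) (hE_trace : γ₀ E = f) (hE_eq : ∀ ψ ∈ M, a E ψ = ℓ ψ)
    (δ ν η : ℝ) (hδ : 0 < δ) (hν : 0 < ν) (hη : 0 < η)
    (Eβ Fβ : W) (hFβ_mem : Fβ ∈ M)
    (h_eq1 : ∀ φ : W, (δ : ℂ) * p Eβ φ + (ν : ℂ) * ⟪γ₁ φ, γ₁ Eβ⟫ +
      (η : ℂ) ^ 2 * ⟪γ₀ φ, γ₀ Eβ - f⟫ + conj (a φ Fβ) = 0)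
    (h_eq2 : ∀ ψ ∈ M, a Eβ ψ - ⟪ψ, Fβ⟫ = ℓ ψ) :
    ‖Fβ‖ ≤ Real.sqrt (max δ ν * (max δ ν / min δ ν)) * ‖E‖ ∧
    ‖γ₀ Eβ - f‖ ≤ (Real.sqrt (max δ ν * (max δ ν / min δ ν)) / η) * ‖E‖ := by
  have hconst := sqrt_max_div_two_le_sqrt_max_mul_max_div_min hδ hν
  let aM : W →+ M → ℂ := AddMonoidHom.ofMapSub (fun u ψ => a u ψ) fun u u' => by
    ext ψ
    simpa [sub_eq_neg_add] using ha_lin (-1) u' u ψ ψ.2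
  obtain ⟨hF, htrace⟩ := rrqr_estimates_general (γ₀ := γ₀.toLinearMap) (γ₁ := γ₁.toLinearMap)
    (a := aM) (ℓ := fun ψ => ℓ ψ) (F := ⟨Fβ, hFβ_mem⟩) hp_pos hp_compat hE_trace
    (funext fun ψ => hE_eq ψ ψ.2) hδ.le hν.le hη ⟨h_eq1, fun ψ => h_eq2 ψ ψ.2⟩
  exact ⟨hF.trans (by gcongr), htrace.trans (by gcongr)⟩
end
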